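/- arXiv:2401.08489 — 2 statements merged into one kernel-verified Lean document; each statement's English description precedes it below -/
import Mathlib

section
/- Let μ be a dominant integral weight of 𝔤 with μ = μ̄, and suppose ⟨μ, α_j∨⟩ = 0 for every index j whose fundamental weight is self-dual (ϖ_j = ϖ̄_j). Then V_μ is orthogonal (in particular, not symplectic). -/
open scoped TensorProduct Classical
open LieAlgebra LieModule Module

namespace AdjPaper

variable {L : Type} [LieRing L] [LieAlgebra ℂ L]

/-- `χ` is a root of `L` relative to the Cartan subalgebra `H`: a nonzero linear functional
on `H` with nontrivial root space. -/
def IsRoot (H : LieSubalgebra ℂ L) [H.IsCartanSubalgebra] (χ : Module.Dual ℂ H) : Prop :=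
  χ ≠ 0 ∧ rootSpace H ⇑χ ≠ ⊥

/-- `t` is the coroot `χ∨` of the root `χ`: it lies in `⁅𝔤_χ, 𝔤_{-χ}⁆` and satisfies
`χ t = 2`. -/
def IsCoroot (H : LieSubalgebra ℂ L) [H.IsCartanSubalgebra] (χ : Module.Dual ℂ H) (t : H) : Prop :=
  χ t = 2 ∧ ∃ e ∈ rootSpace H ⇑χ, ∃ f ∈ rootSpace H ⇑(-χ), (t : L) = ⁅e, f⁆

/-- `α` enumerates the simple roots of a base of the root system of `(L, H)`. -/
structure IsBase (H : LieSubalgebra ℂ L) [H.IsCartanSubalgebra] {r : ℕ} (α : Fin r → Module.Dual ℂ H) : Prop where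
  isRoot : ∀ j, IsRoot H (α j)
  indep : LinearIndependent ℂ α
  pos_neg : ∀ χ : Module.Dual ℂ H, IsRoot H χ →
    (∃ c : Fin r → ℕ, χ = ∑ j, (c j : ℂ) • α j) ∨ (∃ c : Fin r → ℕ, χ = -∑ j, (c j : ℂ) • α j)

/-- `χ` is a positive root relative to the base `α`. -/
def IsPosRoot (H : LieSubalgebra ℂ L) [H.IsCartanSubalgebra] {r : ℕ} (α : Fin r → Module.Dual ℂ H)
    (χ : Module.Dual ℂ H) : Prop :=
  IsRoot H χ ∧ ∃ c : Fin r → ℕ, χ = ∑ j, (c j : ℂ) • α j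

/-- A weight `μ` is dominant integral: all its pairings `⟨μ, α_j∨⟩ = μ (hc j)` with the
simple coroots `hc j` are non-negative integers. -/
def IsDomInt {H : LieSubalgebra ℂ L} {r : ℕ} (hc : Fin r → H) (μ : Module.Dual ℂ H) : Prop :=
  ∀ j, ∃ n : ℕ, μ (hc j) = (n : ℂ)

/-- `V` is an irreducible `L`-module with highest weight `μ` (relative to the Cartan
subalgebra `H` and the base `α`): it is irreducible and possesses a nonzero vector of
`H`-weight `μ` annihilated by all positive root spaces. -/
def IsHWIrrep (H : LieSubalgebra ℂ L) [H.IsCartanSubalgebra] {r : ℕ} (α : Fin r → Module.Dual ℂ H)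
    (μ : Module.Dual ℂ H) (V : Type) [AddCommGroup V] [Module ℂ V]
    [LieRingModule L V] [LieModule ℂ L V] : Prop :=
  IsSimpleOrder (LieSubmodule ℂ L V) ∧
  ∃ v : V, v ≠ 0 ∧ (∀ x : H, ⁅(x : L), v⁆ = μ x • v) ∧
    ∀ χ : Module.Dual ℂ H, IsPosRoot H α χ → ∀ e ∈ rootSpace H ⇑χ, ⁅e, v⁆ = 0

/-- `W` is isomorphic to the dual representation `V*`: there is a nondegenerate
`𝔤`-invariant pairing `W × V → ℂ`. -/
def IsDualPair (W V : Type) [AddCommGroup W] [Module ℂ W] [LieRingModule L W]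
    [AddCommGroup V] [Module ℂ V] [LieRingModule L V] : Prop :=
  ∃ B : W →ₗ[ℂ] V →ₗ[ℂ] ℂ,
    (∀ w, (∀ v, B w v = 0) → w = 0) ∧ (∀ v, (∀ w, B w v = 0) → v = 0) ∧
    ∀ (x : L) (w : W) (v : V), B ⁅x, w⁆ v + B w ⁅x, v⁆ = 0

/-- `V` is an orthogonal representation: it has a nondegenerate invariant symmetric
bilinear form. -/
def IsOrthogonalRep (V : Type) [AddCommGroup V] [Module ℂ V] [LieRingModule L V] : Prop :=
  ∃ B : V →ₗ[ℂ] V →ₗ[ℂ] ℂ,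
    (∀ v w, B v w = B w v) ∧ (∀ v, (∀ w, B v w = 0) → v = 0) ∧
    ∀ (x : L) (v w : V), B ⁅x, v⁆ w + B v ⁅x, w⁆ = 0

/-- `V` is a symplectic representation: it has a nondegenerate invariant alternating
bilinear form. -/
def IsSymplecticRep (V : Type) [AddCommGroup V] [Module ℂ V] [LieRingModule L V] : Prop :=
  ∃ B : V →ₗ[ℂ] V →ₗ[ℂ] ℂ,
    (∀ v, B v v = 0) ∧ (∀ v, (∀ w, B v w = 0) → v = 0) ∧
    ∀ (x : L) (v w : V), B ⁅x, v⁆ w + B v ⁅x, w⁆ = 0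

variable (L) in
/-- The operator on `adj(𝔤) ⊗ V ⊗ V` exchanging the two copies of `V`. -/
noncomputable def swapMap (V : Type) [AddCommGroup V] [Module ℂ V] :
    (L ⊗[ℂ] (V ⊗[ℂ] V)) →ₗ[ℂ] (L ⊗[ℂ] (V ⊗[ℂ] V)) :=
  LinearMap.lTensor L (TensorProduct.comm ℂ V V).toLinearMap

variable (L) in
/-- The `𝔤`-invariant subspace of `adj(𝔤) ⊗ S²V`, realised inside `adj(𝔤) ⊗ V ⊗ V` as the
invariant vectors fixed by the swap of the two copies of `V`. -/
noncomputable def symSquareInvariants (V : Type) [AddCommGroup V] [Module ℂ V]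
    [LieRingModule L V] [LieModule ℂ L V] : Submodule ℂ (L ⊗[ℂ] (V ⊗[ℂ] V)) :=
  (maxTrivSubmodule ℂ L (L ⊗[ℂ] (V ⊗[ℂ] V)) : Submodule ℂ (L ⊗[ℂ] (V ⊗[ℂ] V))) ⊓
    LinearMap.ker (swapMap L V - LinearMap.id)

variable (L) in
/-- The `𝔤`-invariant subspace of `adj(𝔤) ⊗ Λ²V`, realised inside `adj(𝔤) ⊗ V ⊗ V` as the
invariant vectors anti-fixed by the swap of the two copies of `V`. -/
noncomputable def altSquareInvariants (V : Type) [AddCommGroup V] [Module ℂ V]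
    [LieRingModule L V] [LieModule ℂ L V] : Submodule ℂ (L ⊗[ℂ] (V ⊗[ℂ] V)) :=
  (maxTrivSubmodule ℂ L (L ⊗[ℂ] (V ⊗[ℂ] V)) : Submodule ℂ (L ⊗[ℂ] (V ⊗[ℂ] V))) ⊓
    LinearMap.ker (swapMap L V + LinearMap.id)

/-!
Let `t` be the element of the Cartan subalgebra at which all simple roots take the value `2`, and
`(t, e, f)` Kostant's principal `sl₂`-triple. If `v` is a highest weight vector of a self-dual `V_μ`
and `n = μ t`, then `fⁿ v` spans the lowest eigenspace of `t`, and a nonzero invariant form `B` does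
not vanish at `(fⁿ v, v)`. Since `B (fⁿ v) v = (-1)ⁿ B v (fⁿ v)`, the form is symmetric when `n` is
even, and alternating when `n` is odd.

To see that `n` is even, write `μ = ∑ mⱼ ϖⱼ`, so that `n = ∑ mⱼ (ϖⱼ t)`. Conjugation by the Weyl
element of the principal `SL₂` is an automorphism `θ` of `L` that stabilises the Cartan subalgebra
and negates `t`, and it induces an involution of the dual of the Cartan subalgebra that fixes `μ`
and permutes the fundamental weights. Indices exchanged by this permutation contribute equal terms
to the sum, and the fixed ones are those of the self-dual `ϖⱼ`, for which `mⱼ = 0` by hypothesis.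
-/

section Exponential

lemma isNilpotent_toEnd_of_lie_eq_smul {K 𝔤 M : Type*} [Field K] [CharZero K] [LieRing 𝔤]
    [LieAlgebra K 𝔤] [AddCommGroup M] [Module K M] [LieRingModule 𝔤 M] [LieModule K 𝔤 M]
    [FiniteDimensional K M] {h x : 𝔤} {c : K} (hc : c ≠ 0) (hx : ⁅h, x⁆ = c • x) :
    IsNilpotent (toEnd K 𝔤 M x) := by
  set a := toEnd K 𝔤 M h
  set d := toEnd K 𝔤 M x
  let adₐ : Module.End K (Module.End K M) := LinearMap.mulLeft K a - LinearMap.mulRight K a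
  have had : a * d - d * a = c • d := by
    ext m
    change ⁅h, ⁅x, m⁆⁆ - ⁅x, ⁅h, m⁆⁆ = c • ⁅x, m⁆
    rw [← lie_lie, hx, smul_lie]
  have hpow (k : ℕ) : adₐ (d ^ k) = (k * c) • d ^ k := by
    induction k with
    | zero => simp [adₐ]
    | succ k ih =>
      calc adₐ (d ^ (k + 1)) = adₐ (d ^ k) * d + d ^ k * (a * d - d * a) := by
            simp only [adₐ, LinearMap.sub_apply, LinearMap.mulLeft_apply, LinearMap.mulRight_apply]
            noncomm_ring
        _ = ((k + 1 : ℕ) * c) • d ^ (k + 1) := by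
            rw [ih, had, smul_mul_assoc, mul_smul_comm, ← pow_succ, ← add_smul]
            push_cast
            ring_nf
  by_contra hd
  refine Set.infinite_of_injective_forall_mem
    (fun k l hkl => Nat.cast_injective (mul_right_cancel₀ hc hkl)) (fun k => ?_)
    (Module.End.finite_hasEigenvalue adₐ)
  exact Module.End.hasEigenvalue_of_hasEigenvector
    ⟨Module.End.mem_eigenspace_iff.2 (hpow k), fun h0 => hd ⟨k, h0⟩⟩

variable {R : Type*} [CommRing R] {𝔤 M : Type*} [LieRing 𝔤] [LieAlgebra R 𝔤]
  [AddCommGroup M] [Module R M] [LieRingModule 𝔤 M]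

/-- `g` intertwines the `𝔤`-module `M` with its twist by the automorphism `θ` of `𝔤`. -/
def IsTwistedEquiv (θ : 𝔤 ≃ₗ⁅R⁆ 𝔤) (g : M ≃ₗ[R] M) : Prop :=
  ∀ (x : 𝔤) (m : M), g ⁅x, m⁆ = ⁅θ x, g m⁆

/-- Every finite-dimensional `𝔤`-module is isomorphic to its twist by `θ`, as is the case for inner
automorphisms of a semisimple Lie algebra. -/
def PreservesFiniteModules (θ : 𝔤 ≃ₗ⁅R⁆ 𝔤) : Prop :=
  ∀ (M : Type*) [AddCommGroup M] [Module R M] [LieRingModule 𝔤 M] [LieModule R 𝔤 M]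
    [Module.Finite R M], ∃ g : M ≃ₗ[R] M, IsTwistedEquiv θ g

lemma IsTwistedEquiv.trans {θ₁ θ₂ : 𝔤 ≃ₗ⁅R⁆ 𝔤} {g₁ g₂ : M ≃ₗ[R] M} (h₁ : IsTwistedEquiv θ₁ g₁)
    (h₂ : IsTwistedEquiv θ₂ g₂) : IsTwistedEquiv (θ₁.trans θ₂) (g₁.trans g₂) := fun x m => by
  simp only [LinearEquiv.trans_apply, LieEquiv.trans_apply, h₁ x m, h₂ (θ₁ x) (g₁ m)]

lemma IsTwistedEquiv.symm {θ : 𝔤 ≃ₗ⁅R⁆ 𝔤} {g : M ≃ₗ[R] M} (h : IsTwistedEquiv θ g) :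
    IsTwistedEquiv θ.symm g.symm := fun x m => by
  rw [LinearEquiv.symm_apply_eq, h, LieEquiv.apply_symm_apply, LinearEquiv.apply_symm_apply]

variable [LieModule R 𝔤 M] [Module ℚ M]

/-- The exponential of a nilpotent endomorphism, as a linear automorphism. -/
noncomputable def expEquiv {a : Module.End R M} (ha : IsNilpotent a) : M ≃ₗ[R] M :=
  LinearEquiv.ofLinearMap (IsNilpotent.exp a) (IsNilpotent.exp (-a))
    (IsNilpotent.exp_mul_exp_neg_self ha) (IsNilpotent.exp_neg_mul_exp_self ha)

variable [Module ℚ 𝔤]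

/-- The action map `𝔤 ⊗ M → M` intertwines `ad x ⊗ 1 + 1 ⊗ x` and `x`, hence their exponentials. -/
lemma exp_toEnd_lie {x : 𝔤} (hx : IsNilpotent (toEnd R 𝔤 𝔤 x)) (hxM : IsNilpotent (toEnd R 𝔤 M x))
    (y : 𝔤) (m : M) :
    IsNilpotent.exp (toEnd R 𝔤 M x) ⁅y, m⁆ =
      ⁅IsNilpotent.exp (toEnd R 𝔤 𝔤 x) y, IsNilpotent.exp (toEnd R 𝔤 M x) m⁆ := by
  let D₁ : Module.End R (𝔤 ⊗[R] M) := (toEnd R 𝔤 𝔤 x).rTensor M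
  let D₂ : Module.End R (𝔤 ⊗[R] M) := (toEnd R 𝔤 M x).lTensor 𝔤
  have hD₁ : IsNilpotent D₁ := hx.map (Module.End.rTensorAlgHom R 𝔤 M)
  have hD₂ : IsNilpotent D₂ := hxM.map (Module.End.lTensorAlgHom R M 𝔤)
  have hcomm : Commute D₁ D₂ := by ext; simp [D₁, D₂]
  let act : 𝔤 ⊗[R] M →ₗ[R] M := toModuleHom R 𝔤 M
  have hact : toEnd R 𝔤 M x ∘ₗ act = act ∘ₗ (D₁ + D₂) := by
    ext y m
    simp [D₁, D₂, act]
  have hexp := Module.End.commute_exp_left_of_commute (hcomm.isNilpotent_add hD₁ hD₂) hxM hact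
  have h₁ : IsNilpotent.exp D₁ = (IsNilpotent.exp (toEnd R 𝔤 𝔤 x)).rTensor M :=
    (hx.map_exp (Module.End.rTensorAlgHom R 𝔤 M)).symm
  have h₂ : IsNilpotent.exp D₂ = (IsNilpotent.exp (toEnd R 𝔤 M x)).lTensor 𝔤 :=
    (hxM.map_exp (Module.End.lTensorAlgHom R M 𝔤)).symm
  rw [IsNilpotent.exp_add_of_commute hcomm hD₁ hD₂, h₁, h₂] at hexp
  simpa [act] using LinearMap.congr_fun hexp (y ⊗ₜ[R] m)

/-- The inner automorphism `exp (ad x)` for `ad`-nilpotent `x`. -/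
noncomputable def expAd {x : 𝔤} (hx : IsNilpotent (toEnd R 𝔤 𝔤 x)) : 𝔤 ≃ₗ⁅R⁆ 𝔤 :=
  { expEquiv hx with map_lie' := fun {y z} => exp_toEnd_lie hx hx y z }

lemma isTwistedEquiv_expAd {x : 𝔤} (hx : IsNilpotent (toEnd R 𝔤 𝔤 x))
    (hxM : IsNilpotent (toEnd R 𝔤 M x)) : IsTwistedEquiv (expAd hx) (expEquiv hxM) :=
  exp_toEnd_lie hx hxM

lemma expAd_apply {x y z : 𝔤} (hx : IsNilpotent (toEnd R 𝔤 𝔤 x)) (hy : ⁅x, ⁅x, y⁆⁆ = 2 • z)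
    (hz : ⁅x, z⁆ = 0) : expAd hx y = y + ⁅x, y⁆ + z := by
  have h₃ : (toEnd R 𝔤 𝔤 x ^ 3) • y = 0 := by simp [pow_succ, hy, hz]
  change IsNilpotent.exp (toEnd R 𝔤 𝔤 x) • y = _
  rw [IsNilpotent.exp_smul_eq_sum h₃ hx]
  simp [Finset.sum_range_succ, pow_succ, hy, ← Nat.cast_smul_eq_nsmul ℚ]

end Exponential

/-- Conjugation by the Weyl element `exp e * exp (-f) * exp e` of `SL₂`. -/
lemma exists_lieEquiv_apply_eq_neg {K : Type*} [Field K] [CharZero K] {𝔤 : Type*} [LieRing 𝔤]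
    [LieAlgebra K 𝔤] [FiniteDimensional K 𝔤] {h e f : 𝔤} (t : IsSl2Triple h e f) :
    ∃ θ : 𝔤 ≃ₗ⁅K⁆ 𝔤, θ h = -h ∧ PreservesFiniteModules θ := by
  have hlie_e : ⁅h, e⁆ = (2 : K) • e := t.lie_h_e_smul K
  have hlie_f : ⁅h, -f⁆ = (-2 : K) • -f := by rw [lie_neg, t.lie_lie_smul_f K]; simp
  let : Module ℚ 𝔤 := Module.compHom 𝔤 (algebraMap ℚ K)
  have he : IsNilpotent (toEnd K 𝔤 𝔤 e) := isNilpotent_toEnd_of_lie_eq_smul two_ne_zero hlie_e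
  have hf : IsNilpotent (toEnd K 𝔤 𝔤 (-f)) :=
    isNilpotent_toEnd_of_lie_eq_smul (neg_ne_zero.2 two_ne_zero) hlie_f
  refine ⟨((expAd he).trans (expAd hf)).trans (expAd he), ?_, fun M _ _ _ _ _ => ?_⟩
  · have heh : ⁅e, h⁆ = (-2 : K) • e := by rw [← lie_skew, hlie_e, neg_smul]
    have hfh : ⁅-f, h⁆ = (-2 : K) • f := by
      rw [← lie_skew, hlie_f, smul_neg, neg_smul, neg_neg]
    have hfe : ⁅-f, e⁆ = h := by rw [neg_lie, lie_skew, t.lie_e_f]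
    have h₁ : expAd he h = h - (2 : K) • e := by
      rw [expAd_apply (z := 0) he (by simp [heh]) (lie_zero e), heh]
      module
    have h₂ : expAd hf (h - (2 : K) • e) = -h - (2 : K) • e := by
      have hlie : ⁅-f, h - (2 : K) • e⁆ = (-2 : K) • f - (2 : K) • h := by
        rw [lie_sub, lie_smul, hfh, hfe]
      rw [expAd_apply (z := (2 : K) • f) hf _ (by simp), hlie]
      · module
      · rw [hlie, lie_sub, lie_smul, lie_smul, hfh, neg_lie, lie_self]
        module
    have h₃ : expAd he (-h - (2 : K) • e) = -h := by
      have hlie : ⁅e, -h - (2 : K) • e⁆ = (2 : K) • e := by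
        rw [lie_sub, lie_smul, lie_neg, heh, lie_self]
        module
      rw [expAd_apply (z := 0) he (by simp [hlie]) (lie_zero e), hlie]
      module
    simp only [LieEquiv.trans_apply, h₁, h₂, h₃]
  · let : Module ℚ M := Module.compHom M (algebraMap ℚ K)
    have heM : IsNilpotent (toEnd K 𝔤 M e) := isNilpotent_toEnd_of_lie_eq_smul two_ne_zero hlie_e
    have hfM : IsNilpotent (toEnd K 𝔤 M (-f)) :=
      isNilpotent_toEnd_of_lie_eq_smul (neg_ne_zero.2 two_ne_zero) hlie_f
    exact ⟨_, ((isTwistedEquiv_expAd he heM).trans (isTwistedEquiv_expAd hf hfM)).trans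
      (isTwistedEquiv_expAd he heM)⟩

section Grading

variable {R 𝔤 M : Type*} [CommRing R] [LieRing 𝔤] [LieAlgebra R 𝔤] [AddCommGroup M] [Module R M]
  [LieRingModule 𝔤 M] [LieModule R 𝔤 M]

variable (M) in
/-- The sum of the eigenspaces of `h` on `M` whose eigenvalue is below `c` in the order generated
by subtracting `2`, the value at `h` of the simple roots in the application. -/
def eigenBelow (h : 𝔤) (c : R) : Submodule R M :=
  ⨆ k : ℕ, (toEnd R 𝔤 M h).eigenspace (c - 2 * (k + 1))

lemma mem_eigenBelow {h : 𝔤} {c : R} {m : M} (k : ℕ) (hm : ⁅h, m⁆ = (c - 2 * (k + 1)) • m) :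
    m ∈ eigenBelow M h c :=
  Submodule.mem_iSup_of_mem k (Module.End.mem_eigenspace_iff.2 hm)

lemma eigenBelow_le {h : 𝔤} {c : R} {D : Submodule R M}
    (hD : ∀ (k : ℕ) (m : M), ⁅h, m⁆ = (c - 2 * (k + 1)) • m → m ∈ D) : eigenBelow M h c ≤ D :=
  iSup_le fun k m hm => hD k m (Module.End.mem_eigenspace_iff.1 hm)

lemma lie_lie_eq_smul {h y : 𝔤} {m : M} {a c : R} (hy : ⁅h, y⁆ = a • y) (hm : ⁅h, m⁆ = c • m) :
    ⁅h, ⁅y, m⁆⁆ = (a + c) • ⁅y, m⁆ := by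
  rw [leibniz_lie, hy, hm, smul_lie, lie_smul, add_smul]

lemma lie_mem_eigenBelow_of_lie_eq_smul {h y : 𝔤} {m : M} {a c : R} (hy : y ∈ eigenBelow 𝔤 h a)
    (hm : ⁅h, m⁆ = c • m) : ⁅y, m⁆ ∈ eigenBelow M h (a + c) := by
  let act : 𝔤 →ₗ[R] M := (toEnd R 𝔤 M : 𝔤 →ₗ[R] Module.End R M).flip m
  suffices h_le : eigenBelow 𝔤 h a ≤ (eigenBelow M h (a + c)).comap act from h_le hy
  refine eigenBelow_le fun k y hy => mem_eigenBelow k ?_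
  calc ⁅h, ⁅y, m⁆⁆ = (a - 2 * (k + 1) + c) • ⁅y, m⁆ := lie_lie_eq_smul hy hm
    _ = (a + c - 2 * (k + 1)) • ⁅y, m⁆ := by congr 1; ring

lemma lie_mem_eigenBelow {h y : 𝔤} {m : M} {a c : R} (hy : y ∈ eigenBelow 𝔤 h a)
    (hm : m ∈ eigenBelow M h c) : ⁅y, m⁆ ∈ eigenBelow M h (a + c) := by
  suffices h_le : eigenBelow M h c ≤ (eigenBelow M h (a + c)).comap (toEnd R 𝔤 M y) from h_le hm
  refine eigenBelow_le fun k m hm => ?_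
  refine eigenBelow_le (D := eigenBelow M h (a + c)) (fun l m' hm' => mem_eigenBelow (k + l + 1) ?_)
    (lie_mem_eigenBelow_of_lie_eq_smul hy hm)
  rw [hm']
  congr 1
  push_cast
  ring

lemma lie_mem_eigenBelow_of_lie_eq_zero {h x : 𝔤} {m : M} {c : R} (hx : ⁅h, x⁆ = 0)
    (hm : m ∈ eigenBelow M h c) : ⁅x, m⁆ ∈ eigenBelow M h c := by
  suffices h_le : eigenBelow M h c ≤ (eigenBelow M h c).comap (toEnd R 𝔤 M x) from h_le hm
  refine eigenBelow_le fun k m hm => mem_eigenBelow k ?_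
  rw [toEnd_apply_apply, leibniz_lie, hx, hm, zero_lie, zero_add, lie_smul]

lemma eq_zero_of_mem_eigenBelow [IsDomain R] [IsTorsionFree R M] {h : 𝔤} {m : M} {c d : R}
    (hd : ∀ k : ℕ, d ≠ c - 2 * (k + 1)) (hm : m ∈ eigenBelow M h c) (hmd : ⁅h, m⁆ = d • m) :
    m = 0 := by
  have hdisj := (toEnd R 𝔤 M h).eigenspaces_iSupIndep d
  have hle : eigenBelow M h c ≤ ⨆ a, ⨆ _ : a ≠ d, (toEnd R 𝔤 M h).eigenspace a :=
    iSup_le fun k => le_iSup₂_of_le _ (hd k).symm le_rfl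
  exact Submodule.disjoint_def.1 hdisj m (Module.End.mem_eigenspace_iff.2 hmd) (hle hm)

/-- If the translates of `v` are multiples of `v` up to translates by `N`, then the submodule
generated by `v` is already generated by `v` under `N`. -/
lemma lieSpan_singleton_le {N : Submodule R 𝔤} {D : Submodule R M} {v : M}
    (hv : ∀ x : 𝔤, ∃ y ∈ N, ∃ a : R, ⁅x, v⁆ = a • v + ⁅y, v⁆) (hvD : v ∈ D)
    (hD : ∀ y ∈ N, ∀ m ∈ D, ⁅y, m⁆ ∈ D) :
    (LieSubmodule.lieSpan R 𝔤 {v} : Submodule R M) ≤ D := by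
  let S : Set (Submodule R M) := {D | v ∈ D ∧ ∀ y ∈ N, ∀ m ∈ D, ⁅y, m⁆ ∈ D}
  let T : Submodule R M := sInf S
  have hvT : v ∈ T := Submodule.mem_sInf.2 fun D hD => hD.1
  have hNT : ∀ y ∈ N, ∀ m ∈ T, ⁅y, m⁆ ∈ T := fun y hy m hm =>
    Submodule.mem_sInf.2 fun D hD => hD.2 y hy m (Submodule.mem_sInf.1 hm D hD)
  let U : Submodule R M := T ⊓ ⨅ x : 𝔤, T.comap (toEnd R 𝔤 M x)
  have hU {m : M} : m ∈ U ↔ m ∈ T ∧ ∀ x : 𝔤, ⁅x, m⁆ ∈ T := by simp [U, Submodule.mem_iInf]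
  have hUS : U ∈ S := by
    refine ⟨hU.2 ⟨hvT, fun x => ?_⟩, fun y hy m hm => ?_⟩
    · obtain ⟨y, hy, a, hxv⟩ := hv x
      rw [hxv]
      exact T.add_mem (T.smul_mem a hvT) (hNT y hy v hvT)
    · obtain ⟨-, hm⟩ := hU.1 hm
      refine hU.2 ⟨hm y, fun x => ?_⟩
      rw [leibniz_lie]
      exact T.add_mem (hm ⁅x, y⁆) (hNT y hy _ (hm x))
  have hTU : T ≤ U := sInf_le hUS
  let T' : LieSubmodule R 𝔤 M := { T with lie_mem := fun {x _} hm => (hU.1 (hTU hm)).2 x }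
  have hle : LieSubmodule.lieSpan R 𝔤 {v} ≤ T' :=
    LieSubmodule.lieSpan_le.2 (Set.singleton_subset_iff.2 hvT)
  exact fun m hm => Submodule.mem_sInf.1 (hle hm) D ⟨hvD, hD⟩

lemma lieSpan_singleton_le_span_sup_eigenBelow {h : 𝔤} {v : M} {c : R}
    (hv : ∀ x : 𝔤, ∃ y ∈ eigenBelow 𝔤 h (0 : R), ∃ a : R, ⁅x, v⁆ = a • v + ⁅y, v⁆)
    (hvc : ⁅h, v⁆ = c • v) :
    (LieSubmodule.lieSpan R 𝔤 {v} : Submodule R M) ≤ R ∙ v ⊔ eigenBelow M h c := by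
  refine lieSpan_singleton_le hv
    (Submodule.mem_sup_left (Submodule.mem_span_singleton_self v)) fun y hy m hm => ?_
  obtain ⟨w, hw, b, hb, rfl⟩ := Submodule.mem_sup.1 hm
  obtain ⟨a, rfl⟩ := Submodule.mem_span_singleton.1 hw
  rw [lie_add, lie_smul, ← zero_add c]
  exact Submodule.mem_sup_right (Submodule.add_mem _
    (Submodule.smul_mem _ a (lie_mem_eigenBelow_of_lie_eq_smul hy hvc))
    (lie_mem_eigenBelow hy hb))

end Grading

section Roots

variable {H : LieSubalgebra ℂ L} [H.IsCartanSubalgebra] {r : ℕ} {α : Fin r → Module.Dual ℂ H}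

lemma IsPosRoot.exists_apply_eq {χ : Module.Dual ℂ H} (hχ : IsPosRoot H α χ) {t : H}
    (ht : ∀ j, α j t = 2) : ∃ k : ℕ, χ t = 2 * ((k : ℂ) + 1) := by
  obtain ⟨⟨hχ0, -⟩, c, hc⟩ := hχ
  have hsum : ∑ j, c j ≠ 0 := fun hs => hχ0 <| by
    rw [hc]
    exact Finset.sum_eq_zero fun j hj => by rw [Finset.sum_eq_zero_iff.1 hs j hj]; simp
  obtain ⟨k, hk⟩ := Nat.exists_eq_succ_of_ne_zero hsum
  refine ⟨k, ?_⟩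
  calc χ t = ((∑ j, c j : ℕ) : ℂ) * 2 := by simp [hc, LinearMap.sum_apply, ht, Finset.sum_mul]
    _ = 2 * ((k : ℂ) + 1) := by rw [hk]; push_cast; ring

lemma IsBase.isPosRoot (hb : IsBase H α) (j : Fin r) : IsPosRoot H α (α j) :=
  ⟨hb.isRoot j, Pi.single j 1, by simp [Pi.single_apply]⟩

variable (H α) in
/-- The sum of the positive root spaces. -/
def positivePart : Submodule ℂ L :=
  ⨆ (χ : Module.Dual ℂ H) (_ : IsPosRoot H α χ), (rootSpace H ⇑χ).toSubmodule

variable (H α) in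
/-- The sum of the negative root spaces. -/
def negativePart : Submodule ℂ L :=
  ⨆ (χ : Module.Dual ℂ H) (_ : IsPosRoot H α χ), (rootSpace H ⇑(-χ)).toSubmodule

variable [FiniteDimensional ℂ L]

lemma isRoot_of_isNonZero {β : Weight ℂ H L} (hβ : β.IsNonZero) : IsRoot H β.toLinear :=
  ⟨fun h0 => hβ (funext fun x => LinearMap.congr_fun h0 x), β.genWeightSpace_ne_bot⟩

variable [LieAlgebra.IsKilling ℂ L]

lemma coe_lie_eq_smul_of_mem_rootSpace {χ : Module.Dual ℂ H} {y : L} (hy : y ∈ rootSpace H ⇑χ)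
    (t : H) : ⁅(t : L), y⁆ = χ t • y :=
  LieAlgebra.IsKilling.lie_eq_smul_of_mem_rootSpace hy t

lemma positivePart_sup_cartan_sup_negativePart (hb : IsBase H α) :
    positivePart H α ⊔ H.toSubmodule ⊔ negativePart H α = ⊤ := by
  have htop := congrArg LieSubmodule.toSubmodule
    (cartan_sup_iSup_rootSpace_eq_top (K := ℂ) (L := L) (H := H))
  rw [LieSubmodule.top_toSubmodule] at htop
  rw [eq_top_iff, ← htop]
  simp only [LieSubmodule.sup_toSubmodule, LieSubmodule.iSup_toSubmodule]
  refine sup_le (le_sup_of_le_left le_sup_right) (iSup₂_le fun β hβ => ?_)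
  have hβroot := isRoot_of_isNonZero hβ
  rcases hb.pos_neg _ hβroot with ⟨c, hc⟩ | ⟨c, hc⟩
  · exact le_sup_of_le_left (le_sup_of_le_left
      (le_iSup₂_of_le (f := fun χ (_ : IsPosRoot H α χ) => (rootSpace H ⇑χ).toSubmodule)
        β.toLinear ⟨hβroot, c, hc⟩ le_rfl))
  · have hneg : IsPosRoot H α (-β).toLinear :=
      ⟨isRoot_of_isNonZero (Weight.isNonZero_neg.2 hβ), c, by rw [Weight.toLinear_neg, hc, neg_neg]⟩
    refine le_sup_of_le_right
      (le_iSup₂_of_le (f := fun χ (_ : IsPosRoot H α χ) => (rootSpace H ⇑(-χ)).toSubmodule)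
        (-β).toLinear hneg ?_)
    rw [Weight.toLinear_neg, neg_neg]
    exact le_rfl

lemma lie_eq_smul_of_mem_posRootSpace {χ : Module.Dual ℂ H} (hχ : IsPosRoot H α χ) {t : H}
    (ht : ∀ j, α j t = 2) {y : L} (hy : y ∈ rootSpace H ⇑χ) :
    ∃ k : ℕ, ⁅(t : L), y⁆ = (2 * ((k : ℂ) + 1)) • y := by
  obtain ⟨k, hk⟩ := hχ.exists_apply_eq ht
  exact ⟨k, hk ▸ coe_lie_eq_smul_of_mem_rootSpace hy t⟩

lemma lie_eq_smul_of_mem_negRootSpace {χ : Module.Dual ℂ H} (hχ : IsPosRoot H α χ) {t : H}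
    (ht : ∀ j, α j t = 2) {y : L} (hy : y ∈ rootSpace H ⇑(-χ)) :
    ∃ k : ℕ, ⁅(t : L), y⁆ = (-(2 * ((k : ℂ) + 1))) • y := by
  obtain ⟨k, hk⟩ := hχ.exists_apply_eq ht
  refine ⟨k, ?_⟩
  rw [coe_lie_eq_smul_of_mem_rootSpace hy t, LinearMap.neg_apply, hk]

lemma negativePart_le_eigenBelow {t : H} (ht : ∀ j, α j t = 2) :
    negativePart H α ≤ eigenBelow L (t : L) (0 : ℂ) := by
  refine iSup₂_le fun χ hχ y hy => ?_
  obtain ⟨k, hk⟩ := lie_eq_smul_of_mem_negRootSpace hχ ht hy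
  exact mem_eigenBelow k (by rw [hk, zero_sub])

lemma lie_cartan_eq_zero (t x : H) : ⁅(t : L), (x : L)⁆ = 0 :=
  congrArg Subtype.val (LieModule.IsTrivial.trivial t x)

lemma mem_cartan_of_lie_eq_zero (hb : IsBase H α) {t : H} (ht : ∀ j, α j t = 2) {x : L}
    (hx : ⁅(t : L), x⁆ = 0) : x ∈ H := by
  have two_mul_ne_zero (k : ℕ) : (2 * ((k : ℂ) + 1)) ≠ 0 :=
    mul_ne_zero two_ne_zero k.cast_add_one_ne_zero
  let D : Submodule ℂ L := ⨆ a, ⨆ _ : a ≠ (0 : ℂ), (toEnd ℂ L L t).eigenspace a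
  have hD {a : ℂ} {y : L} (ha : a ≠ 0) (hy : ⁅(t : L), y⁆ = a • y) : y ∈ D :=
    le_iSup₂_of_le (f := fun a (_ : a ≠ 0) => (toEnd ℂ L L t).eigenspace a) a ha le_rfl
      (Module.End.mem_eigenspace_iff.2 hy)
  have hpos : positivePart H α ≤ D := iSup₂_le fun χ hχ y hy => by
    obtain ⟨k, hk⟩ := lie_eq_smul_of_mem_posRootSpace hχ ht hy
    exact hD (two_mul_ne_zero k) hk
  have hneg : negativePart H α ≤ D := iSup₂_le fun χ hχ y hy => by
    obtain ⟨k, hk⟩ := lie_eq_smul_of_mem_negRootSpace hχ ht hy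
    exact hD (neg_ne_zero.2 (two_mul_ne_zero k)) hk
  have htop : x ∈ positivePart H α ⊔ H.toSubmodule ⊔ negativePart H α :=
    positivePart_sup_cartan_sup_negativePart hb ▸ Submodule.mem_top
  obtain ⟨z, hz, n, hn, rfl⟩ := Submodule.mem_sup.1 htop
  obtain ⟨p, hp, a, ha, rfl⟩ := Submodule.mem_sup.1 hz
  have hta : ⁅(t : L), a⁆ = 0 := lie_cartan_eq_zero t ⟨a, ha⟩
  have hpn : p + n = 0 := by
    refine Submodule.disjoint_def.1 ((toEnd ℂ L L t).eigenspaces_iSupIndep 0) _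
      (Module.End.mem_eigenspace_iff.2 ?_) (D.add_mem (hpos hp) (hneg hn))
    rw [lie_add, lie_add, hta, add_zero, ← lie_add] at hx
    rw [zero_smul]
    exact hx
  rwa [add_right_comm, hpn, zero_add]

lemma IsBase.span_range_eq_top (hb : IsBase H α) : Submodule.span ℂ (Set.range α) = ⊤ := by
  rw [eq_top_iff, ← LieAlgebra.IsKilling.span_weight_isNonZero_eq_top ℂ L H, Submodule.span_le]
  rintro χ ⟨β, hβ, rfl⟩
  have hsum (c : Fin r → ℕ) : ∑ j, (c j : ℂ) • α j ∈ Submodule.span ℂ (Set.range α) :=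
    Submodule.sum_mem _ fun j _ => Submodule.smul_mem _ _ (Submodule.subset_span ⟨j, rfl⟩)
  rcases hb.pos_neg _ (isRoot_of_isNonZero hβ) with ⟨c, hc⟩ | ⟨c, hc⟩
  · exact hc ▸ hsum c
  · exact hc ▸ Submodule.neg_mem _ (hsum c)

lemma IsBase.exists_forall_apply_eq (hb : IsBase H α) (a : Fin r → ℂ) :
    ∃ t : H, ∀ j, α j t = a j := by
  let b := Module.Basis.mk hb.indep hb.span_range_eq_top.ge
  refine ⟨(Module.evalEquiv ℂ H).symm (b.constr ℂ a), fun j => ?_⟩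
  rw [Module.apply_evalEquiv_symm_apply, ← Module.Basis.constr_basis b ℂ a j, Module.Basis.mk_apply]

lemma exists_basis_of_apply_coroot (hb : IsBase H α) {hc : Fin r → H}
    {ϖ : Fin r → Module.Dual ℂ H} (hϖ : ∀ j k, ϖ j (hc k) = if j = k then (1 : ℂ) else 0) :
    ∃ b : Basis (Fin r) ℂ H, ⇑b = hc ∧ ⇑b.dualBasis = ϖ := by
  have hli : LinearIndependent ℂ hc := by
    rw [Fintype.linearIndependent_iff]
    intro g hg i
    simpa [hϖ] using congrArg (ϖ i) hg
  have hspan : Submodule.span ℂ (Set.range hc) = ⊤ := by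
    refine hli.span_eq_top_of_card_eq_finrank' ?_
    rw [← Module.finrank_eq_card_basis (Module.Basis.mk hb.indep hb.span_range_eq_top.ge),
      Subspace.dual_finrank_eq]
  have hbasis : ⇑(Basis.mk hli hspan.ge) = hc := Basis.coe_mk hli hspan.ge
  refine ⟨Basis.mk hli hspan.ge, hbasis, funext fun j => ?_⟩
  refine Basis.ext (Basis.mk hli hspan.ge) fun k => ?_
  rw [Basis.dualBasis_apply_self, hbasis, hϖ]
  simp only [eq_comm]

lemma not_isRoot_sub (hb : IsBase H α) {i j : Fin r} (hij : i ≠ j) : ¬ IsRoot H (α i + -α j) := by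
  intro hroot
  obtain ⟨ti, hti⟩ := hb.exists_forall_apply_eq (Pi.single i 1)
  obtain ⟨tj, htj⟩ := hb.exists_forall_apply_eq (Pi.single j 1)
  rcases hb.pos_neg _ hroot with ⟨c, hc⟩ | ⟨c, hc⟩
  · have hcj : (-1 : ℂ) = c j := by
      simpa [htj, Pi.single_apply, hij, LinearMap.sum_apply] using LinearMap.congr_fun hc tj
    have : ((c j + 1 : ℕ) : ℂ) = 0 := by push_cast; linear_combination -hcj
    exact Nat.succ_ne_zero _ (Nat.cast_eq_zero.1 this)
  · have hci : (1 : ℂ) = -c i := by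
      simpa [hti, Pi.single_apply, hij.symm, LinearMap.sum_apply] using LinearMap.congr_fun hc ti
    have : ((c i + 1 : ℕ) : ℂ) = 0 := by push_cast; linear_combination hci
    exact Nat.succ_ne_zero _ (Nat.cast_eq_zero.1 this)

lemma lie_eq_zero_of_mem_simpleRootSpace (hb : IsBase H α) {i j : Fin r} (hij : i ≠ j) {e f : L}
    (he : e ∈ rootSpace H ⇑(α i)) (hf : f ∈ rootSpace H ⇑(-α j)) : ⁅e, f⁆ = 0 := by
  by_contra hne
  have hmem : ⁅e, f⁆ ∈ rootSpace H ⇑(α i + -α j) :=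
    lie_mem_genWeightSpace_of_mem_genWeightSpace he hf
  refine not_isRoot_sub hb hij ⟨fun h0 => hij ?_, fun h0 => hne ?_⟩
  · exact hb.indep.injective (add_neg_eq_zero.1 h0)
  · rw [h0] at hmem
    exact (LieSubmodule.mem_bot _).1 hmem

lemma IsCoroot.exists_isSl2Triple {χ : Module.Dual ℂ H} {t : H} (ht : IsCoroot H χ t) :
    ∃ e ∈ rootSpace H ⇑χ, ∃ f ∈ rootSpace H ⇑(-χ), IsSl2Triple (t : L) e f := by
  obtain ⟨hχt, e, he, f, hf, hef⟩ := ht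
  refine ⟨e, he, f, hf, fun h0 => ?_, hef.symm, ?_, ?_⟩
  · rw [ZeroMemClass.coe_eq_zero] at h0
    rw [h0, map_zero] at hχt
    exact two_ne_zero hχt.symm
  · rw [coe_lie_eq_smul_of_mem_rootSpace he, hχt, ofNat_smul_eq_nsmul]
  · rw [coe_lie_eq_smul_of_mem_rootSpace hf, LinearMap.neg_apply, hχt, neg_smul,
      ofNat_smul_eq_nsmul]

/-- Kostant's principal triple: `e` is the sum of the simple root vectors. -/
lemma exists_principal_isSl2Triple [NeZero r] (hb : IsBase H α) {b : Basis (Fin r) ℂ H}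
    (hcr : ∀ j, IsCoroot H (α j) (b j)) {t : H} (ht : ∀ j, α j t = 2) :
    ∃ e f : L, IsSl2Triple (t : L) e f := by
  choose e he f hf htriple using fun j => (hcr j).exists_isSl2Triple
  have htsum : (t : L) = ∑ j, b.repr t j • (b j : L) := by
    conv_lhs => rw [← b.sum_repr t, AddSubmonoidClass.coe_finsetSum]
    rfl
  refine ⟨∑ j, e j, ∑ j, b.repr t j • f j, fun h0 => ?_, ?_, ?_, ?_⟩
  · rw [ZeroMemClass.coe_eq_zero] at h0
    have := ht 0
    rw [h0, map_zero] at this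
    exact two_ne_zero this.symm
  · rw [sum_lie, htsum]
    refine Finset.sum_congr rfl fun i _ => ?_
    rw [lie_sum, Finset.sum_eq_single i]
    · rw [lie_smul, (htriple i).lie_e_f]
    · intro j _ hj
      rw [lie_smul, lie_eq_zero_of_mem_simpleRootSpace hb hj.symm (he i) (hf j), smul_zero]
    · simp
  · rw [lie_sum, Finset.smul_sum]
    refine Finset.sum_congr rfl fun i _ => ?_
    rw [coe_lie_eq_smul_of_mem_rootSpace (he i), ht, ofNat_smul_eq_nsmul]
  · rw [lie_sum, Finset.smul_sum, ← Finset.sum_neg_distrib]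
    refine Finset.sum_congr rfl fun i _ => ?_
    rw [lie_smul, coe_lie_eq_smul_of_mem_rootSpace (hf i), LinearMap.neg_apply, ht,
      neg_smul, ofNat_smul_eq_nsmul, smul_neg, smul_comm]

end Roots

section Irreducible

variable {R 𝔤 M N : Type*} [CommRing R] [LieRing 𝔤] [AddCommGroup M] [Module R M]
  [LieRingModule 𝔤 M] [AddCommGroup N] [Module R N] [LieRingModule 𝔤 N]

lemma mem_lieSpan_singleton [IsIrreducible R 𝔤 M] {v : M} (hv : v ≠ 0) (m : M) :
    m ∈ LieSubmodule.lieSpan R 𝔤 {v} := by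
  have htop : LieSubmodule.lieSpan R 𝔤 {v} = ⊤ :=
    (IsSimpleOrder.eq_bot_or_eq_top _).resolve_left fun hbot =>
      hv ((LieSubmodule.lieSpan_eq_bot_iff R 𝔤 M).1 hbot v rfl)
  exact htop ▸ LieSubmodule.mem_top m

instance prodLieRingModule : LieRingModule 𝔤 (M × N) where
  bracket x p := (⁅x, p.1⁆, ⁅x, p.2⁆)
  add_lie x y p := Prod.ext (add_lie x y p.1) (add_lie x y p.2)
  lie_add x p q := Prod.ext (lie_add x p.1 q.1) (lie_add x p.2 q.2)
  leibniz_lie x y p := Prod.ext (leibniz_lie x y p.1) (leibniz_lie x y p.2)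

lemma prod_lie (x : 𝔤) (p : M × N) : ⁅x, p⁆ = (⁅x, p.1⁆, ⁅x, p.2⁆) := rfl

instance prodLieModule [LieAlgebra R 𝔤] [LieModule R 𝔤 M] [LieModule R 𝔤 N] :
    LieModule R 𝔤 (M × N) where
  smul_lie a x p := Prod.ext (smul_lie a x p.1) (smul_lie a x p.2)
  lie_smul a x p := Prod.ext (lie_smul a x p.1) (lie_smul a x p.2)

/-- The submodule generated by `(v, w)` is the graph of the homomorphism. -/
lemma exists_lieModuleHom_apply_eq [IsIrreducible R 𝔤 M] [IsIrreducible R 𝔤 N] {v : M} {w : N}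
    (hv : v ≠ 0) (hvw : ((0, w) : M × N) ∉ LieSubmodule.lieSpan R 𝔤 {((v, w) : M × N)}) :
    ∃ φ : M →ₗ⁅R,𝔤⁆ N, φ v = w := by
  set T := LieSubmodule.lieSpan R 𝔤 {((v, w) : M × N)}
  have hT : ((v, w) : M × N) ∈ T := LieSubmodule.subset_lieSpan rfl
  let p : T →ₗ⁅R,𝔤⁆ M := { LinearMap.fst R M N ∘ₗ T.toSubmodule.subtype with map_lie' := rfl }
  let q : T →ₗ⁅R,𝔤⁆ N := { LinearMap.snd R M N ∘ₗ T.toSubmodule.subtype with map_lie' := rfl }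
  let K : LieSubmodule R 𝔤 N :=
    { T.toSubmodule.comap (LinearMap.inr R M N) with
      lie_mem := fun {x n} hn => by
        have := T.lie_mem (x := x) hn
        rwa [prod_lie, LinearMap.inr_apply, lie_zero] at this }
  have hK : K = ⊥ := (IsSimpleOrder.eq_bot_or_eq_top K).resolve_right fun htop =>
    hvw (htop ▸ LieSubmodule.mem_top w : w ∈ K)
  have hinj : Function.Injective p := by
    refine (injective_iff_map_eq_zero p).2 ?_
    rintro ⟨⟨m, n⟩, hmn⟩ (rfl : m = 0)
    have hn : n ∈ K := hmn
    exact Subtype.ext <| Prod.ext rfl ((LieSubmodule.mem_bot n).1 (hK ▸ hn))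
  have hsurj : Function.Surjective p := by
    refine LieModuleHom.range_eq_top p |>.1 ?_
    refine (IsSimpleOrder.eq_bot_or_eq_top _).resolve_left fun hbot => hv ?_
    exact (LieSubmodule.mem_bot v).1 (hbot ▸ (LieModuleHom.mem_range p v).2 ⟨⟨_, hT⟩, rfl⟩)
  let e : T ≃ₗ[R] M := LinearEquiv.ofBijective (p : T →ₗ[R] M) ⟨hinj, hsurj⟩
  have he (x : 𝔤) (m : M) : e.symm ⁅x, m⁆ = ⁅x, e.symm m⁆ := by
    refine hinj ?_
    rw [LieModuleHom.map_lie]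
    exact (e.apply_symm_apply _).trans (congrArg _ (e.apply_symm_apply m).symm)
  refine ⟨{ (q : T →ₗ[R] N) ∘ₗ e.symm.toLinearMap with
    map_lie' := fun {x m} => (congrArg q (he x m)).trans (q.map_lie x _) }, ?_⟩
  exact congrArg q (e.symm_apply_eq.2 rfl : e.symm v = ⟨_, hT⟩)

end Irreducible

section HighestWeightVector

variable {H : LieSubalgebra ℂ L} [H.IsCartanSubalgebra] {r : ℕ} {α : Fin r → Module.Dual ℂ H}
  {V W : Type*} [AddCommGroup V] [Module ℂ V] [LieRingModule L V] [AddCommGroup W] [Module ℂ W]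
  [LieRingModule L W] {μ : Module.Dual ℂ H} {v : V} {w : W} {t : H}

variable (H α) in
/-- `v` is a highest weight vector of weight `μ`: a nonzero vector of `H`-weight `μ` annihilated by
all positive root spaces. -/
structure IsHighestWeightVector (μ : Module.Dual ℂ H) (v : V) : Prop where
  ne_zero : v ≠ 0
  coe_lie : ∀ x : H, ⁅(x : L), v⁆ = μ x • v
  lie_eq_zero : ∀ χ : Module.Dual ℂ H, IsPosRoot H α χ → ∀ e ∈ rootSpace H ⇑χ, ⁅e, v⁆ = 0

variable [LieModule ℂ L V] [LieModule ℂ L W]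

lemma IsHighestWeightVector.lie_eq_zero_of_mem_positivePart (hv : IsHighestWeightVector H α μ v)
    {e : L} (he : e ∈ positivePart H α) : ⁅e, v⁆ = 0 := by
  let act : L →ₗ[ℂ] V := (toEnd ℂ L V : L →ₗ[ℂ] Module.End ℂ V).flip v
  have hle : positivePart H α ≤ LinearMap.ker act :=
    iSup₂_le fun χ hχ e he => hv.lie_eq_zero χ hχ e he
  exact hle he

lemma IsHighestWeightVector.notMem_eigenBelow (hv : IsHighestWeightVector H α μ v) :
    v ∉ eigenBelow V (t : L) (μ t) := fun hmem => by
  refine hv.ne_zero (eq_zero_of_mem_eigenBelow (d := μ t) (fun k hk => ?_) hmem (hv.coe_lie t))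
  exact mul_ne_zero two_ne_zero k.cast_add_one_ne_zero (sub_eq_self.1 hk.symm)

variable [FiniteDimensional ℂ L] [LieAlgebra.IsKilling ℂ L]

lemma IsHighestWeightVector.exists_lie_eq (hv : IsHighestWeightVector H α μ v) (hb : IsBase H α)
    (ht : ∀ j, α j t = 2) (x : L) :
    ∃ y ∈ eigenBelow L (t : L) (0 : ℂ), ∃ a : ℂ, ⁅x, v⁆ = a • v + ⁅y, v⁆ := by
  have htop : x ∈ positivePart H α ⊔ H.toSubmodule ⊔ negativePart H α :=
    positivePart_sup_cartan_sup_negativePart hb ▸ Submodule.mem_top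
  obtain ⟨z, hz, y, hy, rfl⟩ := Submodule.mem_sup.1 htop
  obtain ⟨e, he, a, ha, rfl⟩ := Submodule.mem_sup.1 hz
  refine ⟨y, negativePart_le_eigenBelow ht hy, μ ⟨a, ha⟩, ?_⟩
  rw [add_lie, add_lie, hv.lie_eq_zero_of_mem_positivePart he, zero_add, ← hv.coe_lie]

lemma IsHighestWeightVector.lieSpan_le (hv : IsHighestWeightVector H α μ v) (hb : IsBase H α)
    (ht : ∀ j, α j t = 2) : (LieSubmodule.lieSpan ℂ L {v} : Submodule ℂ V) ≤
      ℂ ∙ v ⊔ eigenBelow V (t : L) (μ t) :=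
  lieSpan_singleton_le_span_sup_eigenBelow (hv.exists_lie_eq hb ht) (hv.coe_lie t)

lemma IsHighestWeightVector.exists_eq_smul_of_mem_lieSpan (hv : IsHighestWeightVector H α μ v)
    (hb : IsBase H α) (ht : ∀ j, α j t = 2) {m : V} (hm : m ∈ LieSubmodule.lieSpan ℂ L {v})
    (htm : ⁅(t : L), m⁆ = μ t • m) : ∃ a : ℂ, m = a • v := by
  obtain ⟨m', hm', n, hn, rfl⟩ := Submodule.mem_sup.1 (hv.lieSpan_le hb ht hm)
  obtain ⟨a, rfl⟩ := Submodule.mem_span_singleton.1 hm'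
  have hn0 : n = 0 := by
    refine eq_zero_of_mem_eigenBelow (d := μ t) (fun k hk => ?_) hn ?_
    · exact mul_ne_zero two_ne_zero k.cast_add_one_ne_zero (sub_eq_self.1 hk.symm)
    · rwa [lie_add, lie_smul, hv.coe_lie, smul_add, smul_comm, add_right_inj] at htm
  exact ⟨a, by rw [hn0, add_zero]⟩

variable [IsIrreducible ℂ L V]

lemma IsHighestWeightVector.span_sup_eigenBelow_eq_top (hv : IsHighestWeightVector H α μ v)
    (hb : IsBase H α) (ht : ∀ j, α j t = 2) : ℂ ∙ v ⊔ eigenBelow V (t : L) (μ t) = ⊤ :=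
  eq_top_iff.2 fun m _ =>
    hv.lieSpan_le hb ht (mem_lieSpan_singleton hv.ne_zero m)

lemma IsHighestWeightVector.exists_eq_smul (hv : IsHighestWeightVector H α μ v)
    (hb : IsBase H α) (ht : ∀ j, α j t = 2) {m : V} (htm : ⁅(t : L), m⁆ = μ t • m) :
    ∃ a : ℂ, m = a • v :=
  hv.exists_eq_smul_of_mem_lieSpan hb ht
    (mem_lieSpan_singleton hv.ne_zero m) htm

lemma IsHighestWeightVector.eq_zero_of_lie_eq (hv : IsHighestWeightVector H α μ v)
    (hb : IsBase H α) (ht : ∀ j, α j t = 2) {m : V} (k : ℕ)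
    (htm : ⁅(t : L), m⁆ = (2 * ((k : ℂ) + 1) + μ t) • m) : m = 0 := by
  have hle : ℂ ∙ v ⊔ eigenBelow V (t : L) (μ t) ≤ eigenBelow V (t : L) (μ t + 2) := by
    refine sup_le ((Submodule.span_singleton_le_iff_mem _ _).2 ?_) (eigenBelow_le fun l m hm => ?_)
    · exact mem_eigenBelow 0 (by rw [hv.coe_lie]; simp)
    · exact mem_eigenBelow (l + 1) (by rw [hm]; push_cast; ring_nf)
  rw [hv.span_sup_eigenBelow_eq_top hb ht] at hle
  refine eq_zero_of_mem_eigenBelow (fun l hl => ?_) (hle Submodule.mem_top) htm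
  have : ((k + l + 1 : ℕ) : ℂ) = 0 := by push_cast; linear_combination hl / 2
  exact Nat.cast_ne_zero.2 (Nat.succ_ne_zero _) this

/-- Weight multiplicity one makes the submodule generated by `(v, w)` too small to contain
`(0, w)`. -/
lemma IsHighestWeightVector.exists_lieModuleHom_apply_eq [IsIrreducible ℂ L W]
    (hv : IsHighestWeightVector H α μ v) (hw : IsHighestWeightVector H α μ w) (hb : IsBase H α)
    (ht : ∀ j, α j t = 2) : ∃ φ : V →ₗ⁅ℂ,L⁆ W, φ v = w := by
  have hvw : IsHighestWeightVector H α μ ((v, w) : V × W) :=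
    { ne_zero := fun h0 => hv.ne_zero (Prod.ext_iff.1 h0).1
      coe_lie := fun x => Prod.ext (hv.coe_lie x) (hw.coe_lie x)
      lie_eq_zero := fun χ hχ e he =>
        Prod.ext (hv.lie_eq_zero χ hχ e he) (hw.lie_eq_zero χ hχ e he) }
  refine AdjPaper.exists_lieModuleHom_apply_eq hv.ne_zero fun hmem => ?_
  obtain ⟨a, ha⟩ := hvw.exists_eq_smul_of_mem_lieSpan hb ht hmem
    (Prod.ext (by simp [prod_lie]) (hw.coe_lie t))
  have hav : 0 = a • v := (Prod.ext_iff.1 ha).1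
  have haw : w = a • w := (Prod.ext_iff.1 ha).2
  rw [(smul_eq_zero.1 hav.symm).resolve_right hv.ne_zero, zero_smul] at haw
  exact hw.ne_zero haw

end HighestWeightVector

section InvariantForm

variable {R 𝔤 M : Type*} [CommRing R] [LieRing 𝔤] [AddCommGroup M] [Module R M] [LieRingModule 𝔤 M]
  {B : LinearMap.BilinForm R M}

lemma lieInvariant_flip (hB : B.lieInvariant 𝔤) :
    LinearMap.BilinForm.lieInvariant 𝔤 (LinearMap.flip B) := fun x m n => by
  rw [LinearMap.flip_apply, LinearMap.flip_apply, hB, neg_neg]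

lemma apply_ne_zero_of_lieInvariant [IsIrreducible R 𝔤 M] (hB : B.lieInvariant 𝔤) (hB0 : B ≠ 0)
    {m : M} (hm : m ≠ 0) : B m ≠ 0 := by
  let K : LieSubmodule R 𝔤 M :=
    { LinearMap.ker B with
      lie_mem := fun {x n} (hn : B n = 0) => by
        refine LinearMap.ext fun n' => ?_
        rw [hB, hn, LinearMap.zero_apply, neg_zero, LinearMap.zero_apply] }
  intro hm0
  rcases IsSimpleOrder.eq_bot_or_eq_top K with hK | hK
  · have hmK : m ∈ K := hm0
    exact hm ((LieSubmodule.mem_bot m).1 (hK ▸ hmK))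
  · exact hB0 (LinearMap.ext fun n => (hK ▸ LieSubmodule.mem_top n : n ∈ K))

lemma apply_eq_zero_of_lie_eq_smul [IsDomain R] (hB : B.lieInvariant 𝔤) {h : 𝔤} {m n : M}
    {a b : R} (hm : ⁅h, m⁆ = a • m) (hn : ⁅h, n⁆ = b • n) (hab : a + b ≠ 0) : B m n = 0 := by
  have := hB h m n
  rw [hm, hn, map_smul, map_smul, LinearMap.smul_apply, smul_eq_mul, smul_eq_mul] at this
  exact (mul_eq_zero.1 (by linear_combination this : (a + b) * B m n = 0)).resolve_left hab

lemma pow_toEnd_apply_of_lieInvariant [LieAlgebra R 𝔤] [LieModule R 𝔤 M] (hB : B.lieInvariant 𝔤)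
    (x : 𝔤) (k : ℕ) (m n : M) :
    B ((toEnd R 𝔤 M x ^ k) m) n = (-1) ^ k * B m ((toEnd R 𝔤 M x ^ k) n) := by
  induction k generalizing n with
  | zero => simp
  | succ k ih =>
    rw [pow_succ', Module.End.mul_apply, toEnd_apply_apply, hB, ih, ← toEnd_apply_apply R,
      ← Module.End.mul_apply, ← pow_succ, ← pow_succ']
    ring

end InvariantForm

lemma isDualPair_self_iff {𝔤 V : Type} [LieRing 𝔤] [AddCommGroup V] [Module ℂ V]
    [LieRingModule 𝔤 V] [IsIrreducible ℂ 𝔤 V] : IsDualPair (L := 𝔤) V V ↔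
      ∃ B : LinearMap.BilinForm ℂ V, B ≠ 0 ∧ B.lieInvariant 𝔤 := by
  have : Nontrivial V := nontrivial_of_isIrreducible ℂ 𝔤 V
  constructor
  · rintro ⟨B, hleft, -, hB⟩
    refine ⟨B, ?_, fun x m n => eq_neg_of_add_eq_zero_left (hB x m n)⟩
    rintro rfl
    obtain ⟨m, hm⟩ := exists_ne (0 : V)
    exact hm (hleft m fun _ => rfl)
  · rintro ⟨B, hB0, hB⟩
    have hflip0 : LinearMap.flip B ≠ 0 := fun h0 => hB0 <| by rw [← LinearMap.flip_flip B, h0]; rfl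
    refine ⟨B, fun m hm => ?_, fun m hm => ?_, fun x m n => by rw [hB, neg_add_cancel]⟩
    · by_contra hm0
      exact apply_ne_zero_of_lieInvariant hB hB0 hm0 (LinearMap.ext hm)
    · by_contra hm0
      exact apply_ne_zero_of_lieInvariant (lieInvariant_flip hB) hflip0 hm0 (LinearMap.ext hm)

section HighestWeightForm

variable {H : LieSubalgebra ℂ L} [H.IsCartanSubalgebra] {r : ℕ} {α : Fin r → Module.Dual ℂ H}
  [FiniteDimensional ℂ L] [LieAlgebra.IsKilling ℂ L] {V : Type} [AddCommGroup V] [Module ℂ V]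
  [LieRingModule L V] [LieModule ℂ L V] [IsIrreducible ℂ L V] {μ : Module.Dual ℂ H} {t : H}
  {u v : V} {B : LinearMap.BilinForm ℂ V}

lemma IsHighestWeightVector.apply_ne_zero (hv : IsHighestWeightVector H α μ v) (hb : IsBase H α)
    (ht : ∀ j, α j t = 2) (hu : u ≠ 0) (htu : ⁅(t : L), u⁆ = (-μ t) • u)
    (hB : B.lieInvariant L) (hB0 : B ≠ 0) : B u v ≠ 0 := by
  intro huv
  refine apply_ne_zero_of_lieInvariant hB hB0 hu (LinearMap.ker_eq_top.1 (eq_top_iff.2 ?_))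
  rw [← hv.span_sup_eigenBelow_eq_top hb ht]
  refine sup_le ((Submodule.span_singleton_le_iff_mem _ _).2 huv) (eigenBelow_le fun k m hm => ?_)
  refine apply_eq_zero_of_lie_eq_smul hB htu hm fun h0 => ?_
  have htwo : 2 * ((k : ℂ) + 1) = 0 := by linear_combination -h0
  exact mul_ne_zero two_ne_zero k.cast_add_one_ne_zero htwo

theorem IsHighestWeightVector.isOrthogonalRep_and_not_isSymplecticRep
    (hv : IsHighestWeightVector H α μ v) (hb : IsBase H α) (ht : ∀ j, α j t = 2) (hu : u ≠ 0)
    (htu : ⁅(t : L), u⁆ = (-μ t) • u) (hself : IsDualPair (L := L) V V)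
    (hsymm : ∀ B : LinearMap.BilinForm ℂ V, B.lieInvariant L → B u v = B v u) :
    IsOrthogonalRep (L := L) V ∧ ¬ IsSymplecticRep (L := L) V := by
  constructor
  · obtain ⟨B, hB0, hB⟩ := isDualPair_self_iff.1 hself
    have hBsymm : B - LinearMap.flip B = 0 := by
      by_contra h0
      refine hv.apply_ne_zero hb ht hu htu (B := B - LinearMap.flip B) (fun x m n => ?_) h0 ?_
      · simp only [LinearMap.sub_apply, hB x m n, lieInvariant_flip hB x m n]
        ring
      · rw [LinearMap.sub_apply, LinearMap.sub_apply, LinearMap.flip_apply, hsymm B hB, sub_self]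
    refine ⟨B, fun m n => ?_, fun m hm => ?_, fun x m n => by rw [hB, neg_add_cancel]⟩
    · exact LinearMap.congr_fun₂ (sub_eq_zero.1 hBsymm) m n
    · by_contra hm0
      exact apply_ne_zero_of_lieInvariant hB hB0 hm0 (LinearMap.ext hm)
  · rintro ⟨B, halt, hleft, hB⟩
    have hB' : LinearMap.BilinForm.lieInvariant L B :=
      fun x m n => eq_neg_of_add_eq_zero_left (hB x m n)
    have hB0 : B ≠ 0 := fun h0 => hu (hleft u fun _ => by rw [h0]; rfl)
    refine hv.apply_ne_zero hb ht hu htu hB' hB0 ?_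
    have hneg : -B u v = B v u := LinearMap.IsAlt.neg halt u v
    linear_combination (hsymm B hB' - hneg) / 2

end HighestWeightForm

section Opposition

variable {H : LieSubalgebra ℂ L} {t : H} {θ : L ≃ₗ⁅ℂ⁆ L} {τ : H ≃ₗ[ℂ] H}

/-- `θ` negates `t` and stabilises the Cartan subalgebra, on which it acts by `τ`. In the
application `t` is the element at which all simple roots take the value `2`, and `τ` is then the
longest element of the Weyl group. -/
structure ReversesGrading (θ : L ≃ₗ⁅ℂ⁆ L) (τ : H ≃ₗ[ℂ] H) (t : H) : Prop where
  coe_apply : ∀ x : H, (τ x : L) = θ x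
  apply_eq_neg : τ t = -t

/-- The involution `μ ↦ μ̄` of the paper, which is `-w₀` for `τ` the longest element `w₀` of the
Weyl group. -/
def opposition (τ : H ≃ₗ[ℂ] H) : Module.Dual ℂ H →ₗ[ℂ] Module.Dual ℂ H :=
  -(τ.symm : H →ₗ[ℂ] H).dualMap

lemma opposition_apply (τ : H ≃ₗ[ℂ] H) (μ : Module.Dual ℂ H) (x : H) :
    opposition τ μ x = -μ (τ.symm x) := rfl

lemma ReversesGrading.symm (hθ : ReversesGrading θ τ t) : ReversesGrading θ.symm τ.symm t where
  coe_apply x := by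
    rw [LieEquiv.eq_symm_apply, ← hθ.coe_apply, LinearEquiv.apply_symm_apply]
  apply_eq_neg := by
    rw [LinearEquiv.symm_apply_eq, map_neg, hθ.apply_eq_neg, neg_neg]

lemma ReversesGrading.opposition_apply_eq (hθ : ReversesGrading θ τ t) (μ : Module.Dual ℂ H) :
    opposition τ μ t = μ t := by
  rw [opposition_apply, hθ.symm.apply_eq_neg, map_neg, neg_neg]

section TwistedEquiv

variable {M : Type*} [AddCommGroup M] [Module ℂ M] [LieRingModule L M] {g : M ≃ₗ[ℂ] M} {m : M}

lemma ReversesGrading.coe_lie_apply (hθ : ReversesGrading θ τ t) (hg : IsTwistedEquiv θ g)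
    {μ : Module.Dual ℂ H} (hm : ∀ x : H, ⁅(x : L), m⁆ = μ x • m) (x : H) :
    ⁅(x : L), g m⁆ = (-opposition τ μ) x • g m := by
  have hx : (x : L) = θ (τ.symm x : H) := by
    rw [← hθ.coe_apply, LinearEquiv.apply_symm_apply]
  rw [hx, ← hg, hm, map_smul, LinearMap.neg_apply, opposition_apply, neg_neg]

lemma ReversesGrading.lie_apply_eq_neg_smul (hθ : ReversesGrading θ τ t) (hg : IsTwistedEquiv θ g)
    {c : ℂ} (hm : ⁅(t : L), m⁆ = c • m) : ⁅(t : L), g m⁆ = (-c) • g m := by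
  have ht : (t : L) = -θ (t : L) := by rw [← hθ.coe_apply, hθ.apply_eq_neg]; simp
  rw [ht, neg_lie, ← hg, hm, map_smul, neg_smul]

lemma ReversesGrading.lie_symm_apply_eq_neg_smul (hθ : ReversesGrading θ τ t) {y : L} {c : ℂ}
    (hy : ⁅(t : L), y⁆ = c • y) : ⁅(t : L), θ.symm y⁆ = (-c) • θ.symm y :=
  hθ.symm.lie_apply_eq_neg_smul (M := L) (g := θ.symm.toLinearEquiv)
    (fun x z => LieEquiv.map_lie θ.symm x z) hy

end TwistedEquiv

variable [H.IsCartanSubalgebra] {r : ℕ} {α : Fin r → Module.Dual ℂ H} [FiniteDimensional ℂ L]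
  [LieAlgebra.IsKilling ℂ L]

lemma exists_reversesGrading (hb : IsBase H α) (ht : ∀ j, α j t = 2) {e f : L}
    (hef : IsSl2Triple (t : L) e f) :
    ∃ (θ : L ≃ₗ⁅ℂ⁆ L) (τ : H ≃ₗ[ℂ] H), ReversesGrading θ τ t ∧ PreservesFiniteModules θ := by
  obtain ⟨θ, hθt, hθ⟩ := exists_lieEquiv_apply_eq_neg (K := ℂ) hef
  have hθH : ∀ x ∈ H.toSubmodule, (θ : L →ₗ[ℂ] L) x ∈ H.toSubmodule := fun x hx => by
    refine mem_cartan_of_lie_eq_zero hb ht ?_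
    calc ⁅(t : L), θ x⁆ = -⁅θ (t : L), θ x⁆ := by rw [hθt, neg_lie, neg_neg]
      _ = 0 := by rw [← LieEquiv.map_lie, lie_cartan_eq_zero t ⟨x, hx⟩, map_zero, neg_zero]
  let τ : H ≃ₗ[ℂ] H := LinearEquiv.ofInjectiveEndo ((θ : L →ₗ[ℂ] L).restrict hθH)
    fun x y hxy => Subtype.ext (θ.injective (Subtype.ext_iff.1 hxy))
  exact ⟨θ, τ, ⟨fun x => rfl, Subtype.ext hθt⟩, hθ⟩

variable {V : Type} [AddCommGroup V] [Module ℂ V] [LieRingModule L V] [LieModule ℂ L V]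
  [IsIrreducible ℂ L V] {g : V ≃ₗ[ℂ] V} {μ : Module.Dual ℂ H} {v : V}

lemma ReversesGrading.lie_apply_eq_zero (hθ : ReversesGrading θ τ t) (hg : IsTwistedEquiv θ g)
    (hb : IsBase H α) (ht : ∀ j, α j t = 2) (hv : IsHighestWeightVector H α μ v)
    {χ : Module.Dual ℂ H} (hχ : IsPosRoot H α χ) {f : L} (hf : f ∈ rootSpace H ⇑(-χ)) :
    ⁅f, g v⁆ = 0 := by
  obtain ⟨k, hk⟩ := lie_eq_smul_of_mem_negRootSpace hχ ht hf
  have hraise : ⁅(t : L), θ.symm f⁆ = (2 * ((k : ℂ) + 1)) • θ.symm f := by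
    rw [hθ.lie_symm_apply_eq_neg_smul hk, neg_neg]
  have hzero : ⁅θ.symm f, v⁆ = 0 :=
    hv.eq_zero_of_lie_eq hb ht k (lie_lie_eq_smul hraise (hv.coe_lie t))
  rw [← LieEquiv.apply_symm_apply θ f, ← hg, hzero, map_zero]

lemma ReversesGrading.exists_opposition_eq_natCast [FiniteDimensional ℂ V]
    (hθ : ReversesGrading θ τ t) (hg : IsTwistedEquiv θ g) (hb : IsBase H α)
    (ht : ∀ j, α j t = 2) (hv : IsHighestWeightVector H α μ v) {j : Fin r} {x : H}
    (hx : IsCoroot H (α j) x) : ∃ n : ℕ, opposition τ μ x = n := by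
  obtain ⟨e, -, f, hf, htriple⟩ := hx.exists_isSl2Triple
  have hprim : htriple.symm.HasPrimitiveVectorWith (g v) (opposition τ μ x) :=
    { ne_zero := g.map_ne_zero_iff.2 hv.ne_zero
      lie_h := by
        rw [neg_lie, hθ.coe_lie_apply hg hv.coe_lie, LinearMap.neg_apply, neg_smul, neg_neg]
      lie_e := hθ.lie_apply_eq_zero hg hb ht hv (hb.isPosRoot j) hf }
  exact hprim.exists_nat

lemma ReversesGrading.exists_eq_smul (hθ : ReversesGrading θ τ t) (hg : IsTwistedEquiv θ g)
    (hb : IsBase H α) (ht : ∀ j, α j t = 2) (hv : IsHighestWeightVector H α μ v) {m : V}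
    (hm : ⁅(t : L), m⁆ = (-μ t) • m) : ∃ a : ℂ, m = a • g v := by
  obtain ⟨a, ha⟩ := hv.exists_eq_smul hb ht
    (by rw [hθ.symm.lie_apply_eq_neg_smul hg.symm hm, neg_neg])
  exact ⟨a, by rw [← map_smul, ← ha, LinearEquiv.apply_symm_apply]⟩

/-- Both `g v` and `g⁻¹ v` span the lowest eigenspace of `t`, so they have the same weight. -/
lemma ReversesGrading.opposition_opposition (hθ : ReversesGrading θ τ t)
    (hg : IsTwistedEquiv θ g) (hb : IsBase H α) (ht : ∀ j, α j t = 2)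
    (hv : IsHighestWeightVector H α μ v) : opposition τ (opposition τ μ) = μ := by
  have hg0 : g.symm v ≠ 0 := g.symm.map_ne_zero_iff.2 hv.ne_zero
  obtain ⟨a, ha⟩ := hθ.exists_eq_smul hg hb ht hv
    (hθ.symm.lie_apply_eq_neg_smul hg.symm (hv.coe_lie t))
  ext x
  have hsymm := hθ.symm.coe_lie_apply hg.symm hv.coe_lie (τ.symm x)
  rw [ha, lie_smul, hθ.coe_lie_apply hg hv.coe_lie, smul_comm, ← ha] at hsymm
  have := smul_left_injective ℂ hg0 hsymm
  simpa [opposition_apply] using this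

lemma ReversesGrading.opposition_eq_of_isDualPair (hθ : ReversesGrading θ τ t)
    (hg : IsTwistedEquiv θ g) (hb : IsBase H α) (ht : ∀ j, α j t = 2)
    (hv : IsHighestWeightVector H α μ v) (hself : IsDualPair (L := L) V V) :
    opposition τ μ = μ := by
  obtain ⟨B, hB0, hB⟩ := isDualPair_self_iff.1 hself
  have hBv : B (g v) v ≠ 0 := hv.apply_ne_zero hb ht (g.map_ne_zero_iff.2 hv.ne_zero)
    (hθ.lie_apply_eq_neg_smul hg (hv.coe_lie t)) hB hB0
  ext x
  by_contra hne
  refine hBv (apply_eq_zero_of_lie_eq_smul hB (hθ.coe_lie_apply hg hv.coe_lie x)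
    (hv.coe_lie x) fun h0 => hne ?_)
  rw [LinearMap.neg_apply] at h0
  linear_combination -h0

end Opposition

section Dual

lemma isIrreducible_dual {K 𝔤 M : Type*} [Field K] [LieRing 𝔤] [LieAlgebra K 𝔤] [AddCommGroup M]
    [Module K M] [LieRingModule 𝔤 M] [LieModule K 𝔤 M] [FiniteDimensional K M]
    [IsIrreducible K 𝔤 M] : IsIrreducible K 𝔤 (Module.Dual K M) := by
  have : Nontrivial M := nontrivial_of_isIrreducible K 𝔤 M
  refine IsIrreducible.mk fun N hN => ?_
  let A : LieSubmodule K 𝔤 M :=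
    { N.toSubmodule.dualCoannihilator with
      lie_mem := fun {x m} hm => (Submodule.mem_dualCoannihilator _).2 fun f hf => by
        have hfm := (Submodule.mem_dualCoannihilator m).1 hm ⁅x, f⁆ (N.lie_mem hf)
        rwa [Module.Dual.lie_apply, neg_eq_zero] at hfm }
  have hNA : N.toSubmodule = A.toSubmodule.dualAnnihilator :=
    (Subspace.dualCoannihilator_dualAnnihilator_eq (W := N.toSubmodule)).symm
  rcases IsSimpleOrder.eq_bot_or_eq_top A with hA | hA <;>
    rw [hA] at hNA
  · rwa [LieSubmodule.bot_toSubmodule, Submodule.dualAnnihilator_bot,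
      LieSubmodule.toSubmodule_eq_top] at hNA
  · rw [LieSubmodule.top_toSubmodule, Submodule.dualAnnihilator_top,
      LieSubmodule.toSubmodule_eq_bot] at hNA
    exact absurd hNA hN

variable {H : LieSubalgebra ℂ L} [H.IsCartanSubalgebra] {r : ℕ} {α : Fin r → Module.Dual ℂ H}
  [FiniteDimensional ℂ L] [LieAlgebra.IsKilling ℂ L] {V : Type} [AddCommGroup V] [Module ℂ V]
  [LieRingModule L V] [LieModule ℂ L V] [IsIrreducible ℂ L V] {μ : Module.Dual ℂ H} {v : V}
  {t : H} {θ : L ≃ₗ⁅ℂ⁆ L} {τ : H ≃ₗ[ℂ] H}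

/-- The functional is the coordinate of `v` along the lower eigenspaces of `t`. -/
lemma IsHighestWeightVector.exists_lowestWeightVector_dual (hv : IsHighestWeightVector H α μ v)
    (hb : IsBase H α) (ht : ∀ j, α j t = 2) :
    ∃ ψ : Module.Dual ℂ V, ψ ≠ 0 ∧ (∀ x : H, ⁅(x : L), ψ⁆ = (-μ) x • ψ) ∧
      ∀ y ∈ eigenBelow L (t : L) (0 : ℂ), ⁅y, ψ⁆ = 0 := by
  obtain ⟨ψ, hψv, hψ⟩ :=
    Submodule.exists_le_ker_of_notMem (hv.notMem_eigenBelow (t := t))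
  have ext_of_apply {ψ₁ ψ₂ : Module.Dual ℂ V} (h_eq : ψ₁ v = ψ₂ v)
      (hbelow : ∀ m ∈ eigenBelow V (t : L) (μ t), ψ₁ m = ψ₂ m) : ψ₁ = ψ₂ := by
    have hle : ℂ ∙ v ⊔ eigenBelow V (t : L) (μ t) ≤ LinearMap.eqLocus ψ₁ ψ₂ :=
      sup_le ((Submodule.span_singleton_le_iff_mem _ _).2 h_eq) hbelow
    rw [hv.span_sup_eigenBelow_eq_top hb ht] at hle
    exact LinearMap.ext fun m => hle Submodule.mem_top
  refine ⟨ψ, fun h0 => hψv (by rw [h0]; rfl), fun x => ext_of_apply ?_ fun m hm => ?_,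
    fun y hy => ext_of_apply ?_ fun m hm => ?_⟩
  · simp [hv.coe_lie]
  · rw [Module.Dual.lie_apply, LinearMap.smul_apply, hψ hm,
      hψ (lie_mem_eigenBelow_of_lie_eq_zero (lie_cartan_eq_zero t x) hm), smul_zero, neg_zero]
  · have hyv := lie_mem_eigenBelow_of_lie_eq_smul hy (hv.coe_lie t)
    rw [zero_add] at hyv
    rw [Module.Dual.lie_apply, hψ hyv, neg_zero, LinearMap.zero_apply]
  · have hym := lie_mem_eigenBelow hy hm
    rw [zero_add] at hym
    rw [Module.Dual.lie_apply, hψ hym, neg_zero, LinearMap.zero_apply]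

lemma ReversesGrading.exists_isHighestWeightVector_dual (hθ : ReversesGrading θ τ t)
    {g : Module.Dual ℂ V ≃ₗ[ℂ] Module.Dual ℂ V} (hg : IsTwistedEquiv θ g) (hb : IsBase H α)
    (ht : ∀ j, α j t = 2) (hv : IsHighestWeightVector H α μ v) :
    ∃ ψ : Module.Dual ℂ V, IsHighestWeightVector H α (opposition τ μ) ψ := by
  obtain ⟨ψ, hψ0, hψ, hψlow⟩ := hv.exists_lowestWeightVector_dual hb ht
  refine ⟨g ψ, g.map_ne_zero_iff.2 hψ0, fun x => ?_, fun χ hχ e he => ?_⟩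
  · rw [hθ.coe_lie_apply hg hψ, map_neg, neg_neg]
  · obtain ⟨k, hk⟩ := lie_eq_smul_of_mem_posRootSpace hχ ht he
    have hlow : θ.symm e ∈ eigenBelow L (t : L) (0 : ℂ) :=
      mem_eigenBelow k (by rw [hθ.lie_symm_apply_eq_neg_smul hk, zero_sub])
    rw [← LieEquiv.apply_symm_apply θ e, ← hg, hψlow _ hlow, map_zero]

lemma ReversesGrading.isDualPair_of_opposition_eq [FiniteDimensional ℂ V]
    (hθ : ReversesGrading θ τ t) {g : Module.Dual ℂ V ≃ₗ[ℂ] Module.Dual ℂ V}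
    (hg : IsTwistedEquiv θ g) (hb : IsBase H α) (ht : ∀ j, α j t = 2)
    (hv : IsHighestWeightVector H α μ v) (hμ : opposition τ μ = μ) :
    IsDualPair (L := L) V V := by
  obtain ⟨ψ, hψ⟩ := hθ.exists_isHighestWeightVector_dual hg hb ht hv
  rw [hμ] at hψ
  have : IsIrreducible ℂ L (Module.Dual ℂ V) := isIrreducible_dual
  obtain ⟨φ, hφ⟩ := hv.exists_lieModuleHom_apply_eq hψ hb ht
  refine isDualPair_self_iff.2 ⟨(φ : V →ₗ[ℂ] Module.Dual ℂ V), fun h0 => hψ.ne_zero ?_,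
    fun x m n => ?_⟩
  · rw [← hφ]
    exact LinearMap.congr_fun h0 v
  · exact LinearMap.congr_fun (φ.map_lie x m) n

end Dual

section Parity

variable {ι : Type*}

lemma exists_involutive_eq_ite_of_mul_self_eq_one [Fintype ι] [DecidableEq ι] {A : Matrix ι ι ℕ}
    (hA : A * A = 1) :
    ∃ σ : ι → ι, Function.Involutive σ ∧ ∀ i k, A i k = if k = σ i then 1 else 0 := by
  have hle (i k j : ι) : A i k * A k j ≤ (1 : Matrix ι ι ℕ) i j := by
    rw [← hA, Matrix.mul_apply]
    exact Finset.single_le_sum (fun l _ => Nat.zero_le (A i l * A l j)) (Finset.mem_univ k)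
  have hone (i : ι) : ∃ k, A i k = 1 ∧ A k i = 1 := by
    have hdiag : ∑ k, A i k * A k i ≠ 0 := by
      rw [← Matrix.mul_apply, hA, Matrix.one_apply_eq]
      exact one_ne_zero
    obtain ⟨k, -, hk⟩ := Finset.exists_ne_zero_of_sum_ne_zero hdiag
    have hk1 := (hle i k i).trans_eq (Matrix.one_apply_eq i)
    exact ⟨k, mul_eq_one.1 (hk1.antisymm (Nat.one_le_iff_ne_zero.2 hk))⟩
  choose σ hσ hσ' using hone
  have hite (i k : ι) : A i k = if k = σ i then 1 else 0 := by
    split_ifs with hk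
    · rw [hk, hσ]
    · have hzero := hle (σ i) i k
      rwa [hσ', one_mul, Matrix.one_apply_ne (Ne.symm hk), nonpos_iff_eq_zero] at hzero
  refine ⟨σ, fun i => ?_, hite⟩
  by_contra hne
  exact one_ne_zero ((hσ' i).symm.trans ((hite (σ i) i).trans (if_neg (Ne.symm hne))))

lemma even_sum_of_involutive [Fintype ι] {σ : ι → ι} (hσ : Function.Involutive σ)
    {f : ι → ℕ} (hf : ∀ i, f (σ i) = f i) (hfix : ∀ i, σ i = i → f i = 0) : Even (∑ i, f i) := by
  rw [← ZMod.natCast_eq_zero_iff_even, Nat.cast_sum]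
  refine Finset.sum_involution (fun i _ => σ i) (fun i _ => ?_) (fun i _ hi h0 => hi ?_)
    (fun i _ => Finset.mem_univ _) fun i _ => hσ i
  · rw [hf, CharTwo.add_self_eq_zero]
  · rw [hfix i h0, Nat.cast_zero]

variable [Finite ι] {R E : Type*} [CommRing R] [CharZero R] [AddCommGroup E] [Module R E]
  (b : Basis ι R E) {T : E →ₗ[R] E}

lemma exists_involutive_apply_basis_eq (hT : ∀ i, T (T (b i)) = b i)
    (hnat : ∀ i k, ∃ n : ℕ, b.repr (T (b i)) k = n) :
    ∃ σ : ι → ι, Function.Involutive σ ∧ ∀ i, T (b i) = b (σ i) := by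
  have := Fintype.ofFinite ι
  choose A hA using hnat
  have hTb (i : ι) : T (b i) = ∑ k, (A i k : R) • b k := by
    simp only [← hA, b.sum_repr]
  have hmul : Matrix.of A * Matrix.of A = 1 := by
    ext i j
    refine Nat.cast_injective (R := R) ?_
    calc ((Matrix.of A * Matrix.of A) i j : ℕ) = b.repr (T (T (b i))) j := by
          simp [hTb i, Matrix.mul_apply, hA]
      _ = ((1 : Matrix ι ι ℕ) i j : ℕ) := by
          rw [hT, b.repr_self, Finsupp.single_apply, Matrix.one_apply, Nat.cast_ite, Nat.cast_one,
            Nat.cast_zero]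
  obtain ⟨σ, hσ, hAσ⟩ := exists_involutive_eq_ite_of_mul_self_eq_one hmul
  refine ⟨σ, hσ, fun i => ?_⟩
  have hAσ' (k : ι) : A i k = if k = σ i then 1 else 0 := hAσ i k
  simp [hTb, hAσ']

lemma exists_even_eq_apply_of_involutive {σ : ι → ι}
    (hσ : Function.Involutive σ) (hT : ∀ i, T (b i) = b (σ i)) {ℓ : Module.Dual R E}
    (hℓT : ∀ y, ℓ (T y) = ℓ y) (hℓ : ∀ i, ∃ n : ℕ, ℓ (b i) = n) {x : E} (hx : T x = x)
    (hxnat : ∀ i, ∃ n : ℕ, b.repr x i = n) (hfix : ∀ i, σ i = i → b.repr x i = 0) :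
    ∃ n : ℕ, Even n ∧ ℓ x = n := by
  have := Fintype.ofFinite ι
  choose n hn using hℓ
  choose c hc using hxnat
  have hsum : ∑ i, (c i : R) • b i = x := by simp only [← hc, b.sum_repr]
  have hnσ (i : ι) : n (σ i) = n i :=
    Nat.cast_injective (R := R) (by rw [← hn, ← hn, ← hT, hℓT])
  have hcσ (i : ι) : c (σ i) = c i := by
    refine Nat.cast_injective (R := R) ?_
    rw [← hc (σ i), ← hx, ← hsum]
    simp [hT, Finsupp.single_apply, hσ.injective.eq_iff]
  refine ⟨∑ i, c i * n i, even_sum_of_involutive hσ (fun i => by rw [hcσ, hnσ]) fun i hi => ?_, ?_⟩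
  · rw [Nat.cast_injective (R := R) ((hc i).symm.trans ((hfix i hi).trans Nat.cast_zero.symm)),
      zero_mul]
  · rw [← hsum, map_sum, Nat.cast_sum]
    exact Finset.sum_congr rfl fun i _ => by rw [map_smul, hn, smul_eq_mul, Nat.cast_mul]

end Parity

section PrincipalEigenvalue

variable {H : LieSubalgebra ℂ L} [H.IsCartanSubalgebra] {r : ℕ} {α : Fin r → Module.Dual ℂ H}
  {V : Type} [AddCommGroup V] [Module ℂ V] [LieRingModule L V] [LieModule ℂ L V]
  {μ : Module.Dual ℂ H} {v : V} {t : H} {e f : L}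

lemma isHWIrrep_iff : IsHWIrrep H α μ V ↔
    IsIrreducible ℂ L V ∧ ∃ v : V, IsHighestWeightVector H α μ v :=
  and_congr_right' (exists_congr fun _ =>
    ⟨fun hv => ⟨hv.1, hv.2.1, hv.2.2⟩, fun hv => ⟨hv.ne_zero, hv.coe_lie, hv.lie_eq_zero⟩⟩)

variable [FiniteDimensional ℂ L] [LieAlgebra.IsKilling ℂ L] [IsIrreducible ℂ L V]

lemma IsHighestWeightVector.hasPrimitiveVectorWith (hv : IsHighestWeightVector H α μ v)
    (hb : IsBase H α) (ht : ∀ j, α j t = 2) (hef : IsSl2Triple (t : L) e f) :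
    hef.HasPrimitiveVectorWith v (μ t) where
  ne_zero := hv.ne_zero
  lie_h := hv.coe_lie t
  lie_e := hv.eq_zero_of_lie_eq hb ht 0 <| by
    rw [Nat.cast_zero, zero_add, mul_one]
    exact lie_lie_eq_smul (hef.lie_h_e_smul ℂ) (hv.coe_lie t)

/-- The lowest vector is `f ^ n • v`, and moving `f ^ n` across an invariant form costs the sign
`(-1) ^ n`. -/
lemma IsHighestWeightVector.isOrthogonalRep_and_not_isSymplecticRep_of_even
    (hv : IsHighestWeightVector H α μ v) (hb : IsBase H α) (ht : ∀ j, α j t = 2)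
    (hef : IsSl2Triple (t : L) e f) {n : ℕ} (hn : Even n) (hμ : μ t = n)
    (hself : IsDualPair (L := L) V V) :
    IsOrthogonalRep (L := L) V ∧ ¬ IsSymplecticRep (L := L) V := by
  have hprim := hv.hasPrimitiveVectorWith hb ht hef
  refine hv.isOrthogonalRep_and_not_isSymplecticRep hb ht
    (hprim.pow_toEnd_f_ne_zero_of_eq_nat hμ le_rfl) ?_ hself fun B hB => ?_
  · rw [hprim.lie_h_pow_toEnd_f, hμ]
    congr 1
    ring
  · rw [pow_toEnd_apply_of_lieInvariant hB, hn.neg_one_pow, one_mul]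

lemma ReversesGrading.exists_even_eq_apply {θ : L ≃ₗ⁅ℂ⁆ L} {τ : H ≃ₗ[ℂ] H}
    (hθ : ReversesGrading θ τ t) (hθ' : PreservesFiniteModules.{0, 0, 0} θ) (hb : IsBase H α)
    (ht : ∀ j, α j t = 2) (hef : IsSl2Triple (t : L) e f) {b : Basis (Fin r) ℂ H}
    (hcr : ∀ j, IsCoroot H (α j) (b j)) {F : Fin r → Type} [∀ j, AddCommGroup (F j)]
    [∀ j, Module ℂ (F j)] [∀ j, LieRingModule L (F j)] [∀ j, LieModule ℂ L (F j)]
    [∀ j, FiniteDimensional ℂ (F j)] (hF : ∀ j, IsHWIrrep H α (b.dualBasis j) (F j))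
    (hμ : IsDomInt b μ) (hself : opposition τ μ = μ)
    (hvanish : ∀ j, IsDualPair (L := L) (F j) (F j) → μ (b j) = 0) :
    ∃ n : ℕ, Even n ∧ μ t = n := by
  choose hirr w hw using fun j => isHWIrrep_iff.1 (hF j)
  obtain ⟨σ, hσ, hopp⟩ := exists_involutive_apply_basis_eq b.dualBasis (T := opposition τ)
    (fun j => by
      obtain ⟨g, hg⟩ := hθ' (F j)
      exact hθ.opposition_opposition hg hb ht (hw j))
    fun j k => by
      obtain ⟨g, hg⟩ := hθ' (F j)
      rw [Basis.dualBasis_repr]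
      exact hθ.exists_opposition_eq_natCast hg hb ht (hw j) (hcr k)
  refine exists_even_eq_apply_of_involutive b.dualBasis hσ hopp
    (ℓ := Module.Dual.eval ℂ H t) hθ.opposition_apply_eq
    (fun j => ((hw j).hasPrimitiveVectorWith hb ht hef).exists_nat) hself
    (fun j => by rw [Basis.dualBasis_repr]; exact hμ j) fun j hj => ?_
  obtain ⟨g, hg⟩ := hθ' (Module.Dual ℂ (F j))
  rw [Basis.dualBasis_repr]
  exact hvanish j (hθ.isDualPair_of_opposition_eq hg hb ht (hw j) (by rw [hopp, hj]))

end PrincipalEigenvalue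

/-- If `μ = μ̄` (witnessed by a perfect invariant self-pairing of `V_μ`)
and `⟨μ, α_j∨⟩ = 0` for every index `j` whose fundamental weight is self-dual (i.e. whose
fundamental representation `F j` is self-dual), then `V_μ` is orthogonal, and in
particular not symplectic. -/
theorem statement10
    {L : Type} [LieRing L] [LieAlgebra ℂ L] [FiniteDimensional ℂ L]
    [LieAlgebra.IsSemisimple ℂ L]
    (H : LieSubalgebra ℂ L) [H.IsCartanSubalgebra]
    {r : ℕ} (α : Fin r → Module.Dual ℂ H) (hc : Fin r → H)
    (hbase : IsBase H α) (hcoroot : ∀ j, IsCoroot H (α j) (hc j))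
    (ϖ : Fin r → Module.Dual ℂ H)
    (hϖ : ∀ j k, ϖ j (hc k) = if j = k then (1 : ℂ) else 0)
    (F : Fin r → Type) [∀ j, AddCommGroup (F j)] [∀ j, Module ℂ (F j)]
    [∀ j, LieRingModule L (F j)] [∀ j, LieModule ℂ L (F j)] [∀ j, FiniteDimensional ℂ (F j)]
    (hF : ∀ j, IsHWIrrep H α (ϖ j) (F j))
    (μ : Module.Dual ℂ H) (hμ : IsDomInt hc μ)
    (Vμ : Type) [AddCommGroup Vμ] [Module ℂ Vμ] [LieRingModule L Vμ]
    [LieModule ℂ L Vμ] [FiniteDimensional ℂ Vμ]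
    (hVμ : IsHWIrrep H α μ Vμ)
    (hselfdual : IsDualPair (L := L) Vμ Vμ)
    (hvanish : ∀ j, IsDualPair (L := L) (F j) (F j) → μ (hc j) = 0) :
    IsOrthogonalRep (L := L) Vμ ∧ ¬ IsSymplecticRep (L := L) Vμ := by
  obtain ⟨_, v, hv⟩ := isHWIrrep_iff.1 hVμ
  cases r with
  | zero =>
    exact hv.isOrthogonalRep_and_not_isSymplecticRep hbase (t := 0) (fun j => j.elim0) hv.ne_zero
      (by simp) hselfdual fun _ _ => rfl
  | succ r =>
    obtain ⟨b, rfl, rfl⟩ := exists_basis_of_apply_coroot hbase hϖ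
    obtain ⟨t, ht⟩ := hbase.exists_forall_apply_eq fun _ => 2
    obtain ⟨e, f, hef⟩ := exists_principal_isSl2Triple hbase hcoroot ht
    obtain ⟨θ, τ, hθ, hθ'⟩ := exists_reversesGrading hbase ht hef
    obtain ⟨g, hg⟩ := hθ' Vμ
    have hopp : opposition τ μ = μ := hθ.opposition_eq_of_isDualPair hg hbase ht hv hselfdual
    obtain ⟨n, hn, hμn⟩ := hθ.exists_even_eq_apply hθ' hbase ht hef hcoroot hF hμ hopp hvanish
    exact hv.isOrthogonalRep_and_not_isSymplecticRep_of_even hbase ht hef hn hμn hselfdual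

end AdjPaper
end

section
/- Let Φ be a reduced crystallographic root system with base Δ = {α_1, …, α_r}, positive roots Φ⁺, and Weyl vector ρ = (1/2)Σ_{α ∈ Φ⁺} α. Let μ be a dominant weight, let γ ∈ Φ, and suppose α_j ∈ Δ satisfies ⟨ρ + μ + γ, α_j∨⟩ < 0; set p := −⟨ρ + μ + γ, α_j∨⟩. Then the reflected weight s_{α_j}(ρ + μ + γ) = ρ + μ + γ + p·α_j is dominant, i.e. ⟨ρ + μ + γ + p·α_j, α_k∨⟩ ≥ 0 for every α_k ∈ Δ. -/
open scoped Classical RealInnerProductSpace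

namespace RootPaper

variable {E : Type} [NormedAddCommGroup E] [InnerProductSpace ℝ E] [FiniteDimensional ℝ E]

/-- The Cartan pairing `⟨β, α∨⟩ = 2⟨β, α⟩/⟨α, α⟩`. -/
noncomputable def cpair (β α : E) : ℝ := 2 * ⟪β, α⟫ / ⟪α, α⟫

/-- `Φ` is a reduced crystallographic root system in the real inner product space `E`. -/
structure IsRootSystem (Φ : Finset E) : Prop where
  nonzero : ∀ α ∈ Φ, α ≠ 0
  span : Submodule.span ℝ (Φ : Set E) = ⊤
  reduced : ∀ α ∈ Φ, ∀ t : ℝ, t • α ∈ Φ → t = 1 ∨ t = -1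
  reflection_mem : ∀ α ∈ Φ, ∀ β ∈ Φ, β - cpair β α • α ∈ Φ
  crystallographic : ∀ α ∈ Φ, ∀ β ∈ Φ, ∃ n : ℤ, cpair β α = (n : ℝ)

/-- `Δ` is a base (set of simple roots) of the root system `Φ`: a linearly independent
subset such that every root is a non-negative or non-positive integral combination of
elements of `Δ`. -/
structure IsBase (Φ Δ : Finset E) : Prop where
  subset : (Δ : Set E) ⊆ (Φ : Set E)
  indep : LinearIndependent ℝ (fun a : {x : E // x ∈ Δ} => (a : E))
  pos_neg : ∀ β ∈ Φ, (∃ c : E → ℕ, β = ∑ a ∈ Δ, (c a : ℝ) • a) ∨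
    (∃ c : E → ℕ, β = -∑ a ∈ Δ, (c a : ℝ) • a)

/-- The positive roots of `Φ` relative to the base `Δ`. -/
noncomputable def posRoots (Φ Δ : Finset E) : Finset E :=
  Φ.filter fun β => ∃ c : E → ℕ, β = ∑ a ∈ Δ, (c a : ℝ) • a

/-- The Weyl vector `ρ`, half the sum of the positive roots. -/
noncomputable def weylVector (Φ Δ : Finset E) : E := (2⁻¹ : ℝ) • ∑ β ∈ posRoots Φ Δ, β

/-! The pairing of the reflected weight with `αk` decreases in `p`, since distinct simple roots
pair non-positively. As `p ≤ p₀ := -⟨γ, αj∨⟩ - 1` and `⟨ρ, αk∨⟩ = 1`, it suffices that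
`β := γ + p₀ • αj` satisfies `⟨β, αk∨⟩ ≥ -1`. If `γ = -αj`, then `β = 0`. Otherwise
`β = s_{αj} (s_γ αj)` is a root as long as `αj`, and `‖γ‖² ≥ 2 ‖αj‖²`. Were `⟨β, αk∨⟩ ≤ -2`, then
`‖β‖² ≥ 2 ‖αk‖²`, so that `‖γ‖² ≥ 4 ‖αk‖²`; but the squared lengths of two roots have ratio less
than four if the roots are not orthogonal, or if some root is orthogonal to neither. -/

section

omit [FiniteDimensional ℝ E]

theorem cpair_add_left (x y a : E) : cpair (x + y) a = cpair x a + cpair y a := by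
  rw [cpair, cpair, cpair, inner_add_left]
  ring

theorem cpair_sub_left (x y a : E) : cpair (x - y) a = cpair x a - cpair y a := by
  rw [cpair, cpair, cpair, inner_sub_left]
  ring

theorem cpair_smul_left (t : ℝ) (x a : E) : cpair (t • x) a = t * cpair x a := by
  rw [cpair, cpair, real_inner_smul_left]
  ring

theorem cpair_sum_left {ι : Type*} (s : Finset ι) (f : ι → E) (a : E) :
    cpair (∑ i ∈ s, f i) a = ∑ i ∈ s, cpair (f i) a := by
  simp only [cpair, sum_inner, Finset.mul_sum, Finset.sum_div]

theorem cpair_self {a : E} (ha : a ≠ 0) : cpair a a = 2 :=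
  mul_div_cancel_right₀ 2 (inner_self_ne_zero.mpr ha)

theorem cpair_mul_norm_sq (x y : E) : cpair x y * ‖y‖ ^ 2 = 2 * ⟪x, y⟫ := by
  rcases eq_or_ne y 0 with rfl | hy
  · simp
  · rw [cpair, real_inner_self_eq_norm_sq, div_mul_cancel₀ _ (by positivity)]

theorem cpair_mul_norm_sq_comm (x y : E) : cpair x y * ‖y‖ ^ 2 = cpair y x * ‖x‖ ^ 2 := by
  rw [cpair_mul_norm_sq, cpair_mul_norm_sq, real_inner_comm]

theorem cpair_eq_zero_iff (x y : E) : cpair x y = 0 ↔ ⟪x, y⟫ = 0 := by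
  rcases eq_or_ne y 0 with rfl | hy
  · simp [cpair]
  · simp [cpair, hy]

/-- The reflection `s_a` in the hyperplane orthogonal to `a`, as a linear isometry; it is the
identity for `a = 0`. -/
noncomputable def rootReflection (a : E) : E ≃ₗᵢ[ℝ] E := (ℝ ∙ a)ᗮ.reflection

theorem rootReflection_apply (a x : E) : rootReflection a x = x - cpair x a • a := by
  rw [rootReflection, Submodule.reflection_orthogonal_apply, Submodule.reflection_singleton_apply,
    cpair, real_inner_comm, real_inner_self_eq_norm_sq]
  simp only [RCLike.ofReal_real_eq_id, id_eq]
  module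

theorem rootReflection_rootReflection (a x : E) : rootReflection a (rootReflection a x) = x :=
  Submodule.reflection_reflection _ x

theorem rootReflection_self (a : E) : rootReflection a a = -a :=
  Submodule.reflection_orthogonalComplement_singleton_eq_neg a

theorem cpair_rootReflection (a x : E) : cpair (rootReflection a x) a = -cpair x a := by
  rcases eq_or_ne a 0 with rfl | ha
  · simp [cpair]
  · rw [rootReflection_apply, cpair_sub_left, cpair_smul_left, cpair_self ha]
    ring

theorem rootReflection_rootReflection_eq_of_cpair_eq_neg_one {x y : E} (h : cpair y x = -1) :
    rootReflection y (rootReflection x y) = x - (cpair x y + 1) • y := by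
  have hxy : rootReflection x y = x + y := by
    rw [rootReflection_apply, h]
    module
  rw [hxy, map_add, rootReflection_self, rootReflection_apply]
  module

namespace IsRootSystem

variable {Φ : Finset E} {x y z : E}

theorem rootReflection_mem (hΦ : IsRootSystem Φ) (hx : x ∈ Φ) (hy : y ∈ Φ) :
    rootReflection x y ∈ Φ := by
  rw [rootReflection_apply]
  exact hΦ.reflection_mem x hx y hy

theorem abs_inner_lt_norm_mul_norm (hΦ : IsRootSystem Φ) (hx : x ∈ Φ) (hy : y ∈ Φ)
    (hne : x ≠ y) (hne_neg : x ≠ -y) : |⟪x, y⟫| < ‖x‖ * ‖y‖ := by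
  refine (abs_real_inner_le_norm x y).lt_of_ne fun heq ↦ ?_
  obtain ⟨t, -, rfl⟩ :=
    (norm_inner_eq_norm_iff (𝕜 := ℝ) (hΦ.nonzero x hx) (hΦ.nonzero y hy)).mp heq
  rcases hΦ.reduced x hx t hy with rfl | rfl
  · exact hne (one_smul ℝ x).symm
  · exact hne_neg (by module)

theorem cpair_mul_cpair_lt_four (hΦ : IsRootSystem Φ) (hx : x ∈ Φ) (hy : y ∈ Φ)
    (hne : x ≠ y) (hne_neg : x ≠ -y) : cpair x y * cpair y x < 4 := by
  have hpos : 0 < (‖x‖ * ‖y‖) ^ 2 := by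
    have := norm_pos_iff.mpr (hΦ.nonzero x hx)
    have := norm_pos_iff.mpr (hΦ.nonzero y hy)
    positivity
  have hsq : ⟪x, y⟫ ^ 2 < (‖x‖ * ‖y‖) ^ 2 :=
    sq_lt_sq.mpr ((hΦ.abs_inner_lt_norm_mul_norm hx hy hne hne_neg).trans_le (le_abs_self _))
  refine lt_of_mul_lt_mul_right ?_ hpos.le
  calc cpair x y * cpair y x * (‖x‖ * ‖y‖) ^ 2
      = (cpair x y * ‖y‖ ^ 2) * (cpair y x * ‖x‖ ^ 2) := by ring
    _ = 4 * ⟪x, y⟫ ^ 2 := by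
      rw [cpair_mul_norm_sq, cpair_mul_norm_sq, real_inner_comm]
      ring
    _ < 4 * (‖x‖ * ‖y‖) ^ 2 := by linarith

theorem cpair_le_neg_two_of_lt_neg_one (hΦ : IsRootSystem Φ) (hx : x ∈ Φ) (hy : y ∈ Φ)
    (h : cpair x y < -1) : cpair x y ≤ -2 := by
  obtain ⟨n, hn⟩ := hΦ.crystallographic y hy x hx
  rw [hn] at h ⊢
  have : n < -1 := by exact_mod_cast h
  exact_mod_cast (by lia : n ≤ -2)

theorem cpair_eq_neg_one_of_le_neg_two (hΦ : IsRootSystem Φ) (hx : x ∈ Φ) (hy : y ∈ Φ)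
    (hne_neg : x ≠ -y) (h : cpair x y ≤ -2) : cpair y x = -1 := by
  have hne : x ≠ y := by
    rintro rfl
    linarith [cpair_self (hΦ.nonzero x hx)]
  have hneg : cpair y x < 0 := by
    have := cpair_mul_norm_sq_comm x y
    have hy_pos := norm_pos_iff.mpr (hΦ.nonzero y hy)
    by_contra! hnonneg
    nlinarith [mul_nonneg hnonneg (sq_nonneg ‖x‖), pow_pos hy_pos 2]
  have hgt : -2 < cpair y x := by
    by_contra! hle
    nlinarith [hΦ.cpair_mul_cpair_lt_four hx hy hne hne_neg]
  obtain ⟨n, hn⟩ := hΦ.crystallographic x hx y hy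
  rw [hn] at hneg hgt ⊢
  norm_cast at hneg hgt
  exact_mod_cast (by lia : n = -1)

theorem two_mul_norm_sq_le_of_cpair_le_neg_two (hΦ : IsRootSystem Φ) (hx : x ∈ Φ) (hy : y ∈ Φ)
    (hne_neg : x ≠ -y) (h : cpair x y ≤ -2) : 2 * ‖y‖ ^ 2 ≤ ‖x‖ ^ 2 := by
  have hcomm := cpair_mul_norm_sq_comm x y
  rw [hΦ.cpair_eq_neg_one_of_le_neg_two hx hy hne_neg h] at hcomm
  nlinarith [sq_nonneg ‖y‖]

theorem norm_sq_lt_four_mul_of_inner_ne_zero (hΦ : IsRootSystem Φ) (hx : x ∈ Φ) (hy : y ∈ Φ)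
    (hxy : ⟪x, y⟫ ≠ 0) : ‖x‖ ^ 2 < 4 * ‖y‖ ^ 2 := by
  have hy_pos : 0 < ‖y‖ ^ 2 := by
    have := norm_pos_iff.mpr (hΦ.nonzero y hy)
    positivity
  by_contra! hle
  have hne : x ≠ y := by
    rintro rfl
    linarith
  have hne_neg : x ≠ -y := by
    rintro rfl
    rw [norm_neg] at hle
    linarith
  have hone_le : 1 ≤ cpair y x ^ 2 := by
    obtain ⟨n, hn⟩ := hΦ.crystallographic x hx y hy
    have hn_ne : n ≠ 0 := by
      rintro rfl
      rw [Int.cast_zero, cpair_eq_zero_iff, real_inner_comm] at hn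
      exact hxy hn
    rw [hn]
    exact_mod_cast (sq_pos_of_ne_zero hn_ne : 0 < n ^ 2)
  have hfour_le : 4 * ‖y‖ ^ 2 ≤ (cpair x y * cpair y x) * ‖y‖ ^ 2 :=
    calc 4 * ‖y‖ ^ 2 ≤ ‖x‖ ^ 2 := hle
      _ ≤ cpair y x ^ 2 * ‖x‖ ^ 2 := le_mul_of_one_le_left (sq_nonneg _) hone_le
      _ = cpair y x * (cpair y x * ‖x‖ ^ 2) := by ring
      _ = (cpair x y * cpair y x) * ‖y‖ ^ 2 := by
        rw [← cpair_mul_norm_sq_comm]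
        ring
  exact (le_of_mul_le_mul_right hfour_le hy_pos).not_gt
    (hΦ.cpair_mul_cpair_lt_four hx hy hne hne_neg)

theorem norm_sq_lt_four_mul_of_inner_ne_zero_of_inner_ne_zero (hΦ : IsRootSystem Φ) (hx : x ∈ Φ)
    (hy : y ∈ Φ) (hz : z ∈ Φ) (hxy : ⟪x, y⟫ ≠ 0) (hyz : ⟪y, z⟫ ≠ 0) :
    ‖x‖ ^ 2 < 4 * ‖z‖ ^ 2 := by
  by_cases hxz : ⟪x, z⟫ = 0
  · -- `s_y z` has the length of `z` and is no longer orthogonal to `x`.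
    rw [← (rootReflection y).norm_map z]
    refine hΦ.norm_sq_lt_four_mul_of_inner_ne_zero hx (hΦ.rootReflection_mem hy hz) ?_
    have hzy : cpair z y ≠ 0 := by rwa [Ne, cpair_eq_zero_iff, real_inner_comm]
    rw [rootReflection_apply, inner_sub_right, hxz, real_inner_smul_right, zero_sub]
    exact neg_ne_zero.mpr (mul_ne_zero hzy hxy)
  · exact hΦ.norm_sq_lt_four_mul_of_inner_ne_zero hx hz hxz

theorem norm_sq_lt_four_mul_of_inner_sub_smul_ne_zero (hΦ : IsRootSystem Φ) (hx : x ∈ Φ)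
    (hy : y ∈ Φ) (hz : z ∈ Φ) (hxy : ⟪x, y⟫ ≠ 0) {t : ℝ} (h : ⟪x - t • y, z⟫ ≠ 0) :
    ‖x‖ ^ 2 < 4 * ‖z‖ ^ 2 := by
  by_cases hyz : ⟪y, z⟫ = 0
  · rw [inner_sub_left, real_inner_smul_left, hyz, mul_zero, sub_zero] at h
    exact hΦ.norm_sq_lt_four_mul_of_inner_ne_zero hx hz h
  · exact hΦ.norm_sq_lt_four_mul_of_inner_ne_zero_of_inner_ne_zero hx hy hz hxy hyz

end IsRootSystem

namespace IsBase

variable {Φ Δ : Finset E} {a b : E}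

theorem coeff_eq_of_sum_smul_eq (hΔ : IsBase Φ Δ) {f g : E → ℝ}
    (h : ∑ x ∈ Δ, f x • x = ∑ x ∈ Δ, g x • x) (ha : a ∈ Δ) : f a = g a :=
  (linearIndepOn_finset_iffₛ (v := id)).mp hΔ.indep f g h a ha

theorem coeff_nonneg_of_sum_smul_mem_posRoots (hΔ : IsBase Φ Δ) {f : E → ℝ}
    (h : ∑ x ∈ Δ, f x • x ∈ posRoots Φ Δ) (ha : a ∈ Δ) : 0 ≤ f a := by
  obtain ⟨-, c, hc⟩ := Finset.mem_filter.mp h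
  rw [hΔ.coeff_eq_of_sum_smul_eq hc ha]
  exact Nat.cast_nonneg _

theorem sum_smul_mem_posRoots_of_coeff_pos (hΔ : IsBase Φ Δ) {f : E → ℝ}
    (h : ∑ x ∈ Δ, f x • x ∈ Φ) (ha : a ∈ Δ) (hfa : 0 < f a) :
    ∑ x ∈ Δ, f x • x ∈ posRoots Φ Δ := by
  refine Finset.mem_filter.mpr ⟨h, (hΔ.pos_neg _ h).resolve_right ?_⟩
  rintro ⟨c, hc⟩
  simp only [← Finset.sum_neg_distrib, ← neg_smul] at hc
  linarith [hΔ.coeff_eq_of_sum_smul_eq hc ha, (c a).cast_nonneg (α := ℝ)]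

theorem mem_posRoots (hΔ : IsBase Φ Δ) (ha : a ∈ Δ) : a ∈ posRoots Φ Δ :=
  Finset.mem_filter.mpr ⟨hΔ.subset ha, Pi.single a 1, by simp [Pi.single_apply, ha]⟩

theorem exists_coeff_ne_zero (hΔ : IsBase Φ Δ) (hΦ : IsRootSystem Φ) (ha : a ∈ Δ) (hb : b ∈ Φ)
    (hba : b ≠ a) {c : E → ℕ} (hc : b = ∑ x ∈ Δ, (c x : ℝ) • x) :
    ∃ x ∈ Δ, x ≠ a ∧ c x ≠ 0 := by
  by_contra! hzero
  have hb_eq : b = (c a : ℝ) • a := by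
    refine hc.trans (Finset.sum_eq_single_of_mem a ha fun x hx hxa ↦ ?_)
    rw [hzero x hx hxa, Nat.cast_zero, zero_smul]
  rcases hΦ.reduced a (hΔ.subset ha) (c a) (hb_eq ▸ hb) with h | h
  · exact hba (by rw [hb_eq, h, one_smul])
  · linarith [(c a).cast_nonneg (α := ℝ)]

theorem sub_smul_mem_posRoots (hΔ : IsBase Φ Δ) (hΦ : IsRootSystem Φ) (ha : a ∈ Δ)
    (hb : b ∈ posRoots Φ Δ) (hba : b ≠ a) {t : ℝ} (h : b - t • a ∈ Φ) :
    b - t • a ∈ posRoots Φ Δ := by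
  obtain ⟨hbΦ, c, hc⟩ := Finset.mem_filter.mp hb
  obtain ⟨x, hx, hxa, hcx⟩ := hΔ.exists_coeff_ne_zero hΦ ha hbΦ hba hc
  have hsum : b - t • a = ∑ y ∈ Δ, ((c y : ℝ) - Pi.single (M := fun _ ↦ ℝ) a t y) • y := by
    simp [sub_smul, ← hc, Pi.single_apply, ha]
  rw [hsum] at h ⊢
  -- Subtracting a multiple of `a` leaves the positive coefficient of `x` unchanged.
  refine hΔ.sum_smul_mem_posRoots_of_coeff_pos h hx ?_
  rw [Pi.single_eq_of_ne hxa, sub_zero]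
  exact Nat.cast_pos.mpr (Nat.pos_of_ne_zero hcx)

theorem neg_notMem_posRoots (hΔ : IsBase Φ Δ) (ha : a ∈ Δ) : -a ∉ posRoots Φ Δ := by
  intro h
  have hsum : -a = ∑ x ∈ Δ, Pi.single (M := fun _ ↦ ℝ) a (-1) x • x := by
    simp [Pi.single_apply, ha]
  have := hΔ.coeff_nonneg_of_sum_smul_mem_posRoots (hsum ▸ h) ha
  rw [Pi.single_eq_same] at this
  linarith

theorem sub_smul_notMem (hΔ : IsBase Φ Δ) (hΦ : IsRootSystem Φ) (ha : a ∈ Δ) (hb : b ∈ Δ)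
    (hab : a ≠ b) {t : ℝ} (ht : 0 < t) : a - t • b ∉ Φ := by
  intro h
  have hmem := hΔ.sub_smul_mem_posRoots hΦ hb (hΔ.mem_posRoots ha) hab h
  have hsum : a - t • b =
      ∑ x ∈ Δ, (Pi.single (M := fun _ ↦ ℝ) a 1 x - Pi.single (M := fun _ ↦ ℝ) b t x) • x := by
    simp [sub_smul, Pi.single_apply, ha, hb]
  have := hΔ.coeff_nonneg_of_sum_smul_mem_posRoots (hsum ▸ hmem) hb
  rw [Pi.single_eq_of_ne hab.symm, Pi.single_eq_same] at this
  linarith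

theorem cpair_nonpos (hΔ : IsBase Φ Δ) (hΦ : IsRootSystem Φ) (ha : a ∈ Δ) (hb : b ∈ Δ)
    (hab : a ≠ b) : cpair a b ≤ 0 := by
  by_contra! hpos
  exact hΔ.sub_smul_notMem hΦ ha hb hab hpos
    (hΦ.reflection_mem b (hΔ.subset hb) a (hΔ.subset ha))

theorem rootReflection_mem_posRoots_erase (hΔ : IsBase Φ Δ) (hΦ : IsRootSystem Φ) (ha : a ∈ Δ)
    (hb : b ∈ (posRoots Φ Δ).erase a) : rootReflection a b ∈ (posRoots Φ Δ).erase a := by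
  obtain ⟨hba, hb⟩ := Finset.mem_erase.mp hb
  have hbΦ : b ∈ Φ := Finset.mem_of_mem_filter b hb
  refine Finset.mem_erase.mpr ⟨fun heq ↦ hΔ.neg_notMem_posRoots ha ?_, ?_⟩
  · rwa [← rootReflection_self a, ← congrArg (rootReflection a) heq, rootReflection_rootReflection]
  · have hmem := hΦ.rootReflection_mem (hΔ.subset ha) hbΦ
    rw [rootReflection_apply] at hmem ⊢
    exact hΔ.sub_smul_mem_posRoots hΦ ha hb hba hmem

theorem cpair_weylVector (hΔ : IsBase Φ Δ) (hΦ : IsRootSystem Φ) (ha : a ∈ Δ) :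
    cpair (weylVector Φ Δ) a = 1 := by
  have ha0 := hΦ.nonzero a (hΔ.subset ha)
  have hcancel : ∑ b ∈ (posRoots Φ Δ).erase a, cpair b a = 0 := by
    refine Finset.sum_involution (fun b _ ↦ rootReflection a b) (fun b _ ↦ ?_) (fun b _ hb heq ↦ ?_)
      (fun b hb ↦ hΔ.rootReflection_mem_posRoots_erase hΦ ha hb)
      (fun b _ ↦ rootReflection_rootReflection a b)
    · rw [cpair_rootReflection, add_neg_cancel]
    · have := cpair_rootReflection a b
      rw [heq] at this
      exact hb (by linarith)
  rw [weylVector, cpair_smul_left, cpair_sum_left, ← Finset.add_sum_erase _ _ (hΔ.mem_posRoots ha),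
    cpair_self ha0, hcancel]
  norm_num

theorem neg_one_le_cpair_sub_smul (hΔ : IsBase Φ Δ) (hΦ : IsRootSystem Φ) {γ : E} (hγ : γ ∈ Φ)
    (ha : a ∈ Δ) (hb : b ∈ Δ) (hab : a ≠ b) (hγa : cpair γ a ≤ -2) :
    -1 ≤ cpair (γ - (cpair γ a + 1) • a) b := by
  have haΦ : a ∈ Φ := hΔ.subset ha
  have hbΦ : b ∈ Φ := hΔ.subset hb
  by_cases hγ_neg : γ = -a
  · have hzero : γ - (cpair γ a + 1) • a = 0 := by
      rw [hγ_neg, ← neg_one_smul ℝ a, cpair_smul_left, cpair_self (hΦ.nonzero a haΦ)]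
      module
    rw [hzero, (cpair_eq_zero_iff 0 b).mpr (inner_zero_left b)]
    norm_num
  set β := γ - (cpair γ a + 1) • a with hβ
  have hβ_eq : rootReflection a (rootReflection γ a) = β :=
    rootReflection_rootReflection_eq_of_cpair_eq_neg_one
      (hΦ.cpair_eq_neg_one_of_le_neg_two hγ haΦ hγ_neg hγa)
  have hβΦ : β ∈ Φ := hβ_eq ▸ hΦ.rootReflection_mem haΦ (hΦ.rootReflection_mem hγ haΦ)
  have hβ_norm : ‖β‖ = ‖a‖ := by
    rw [← hβ_eq, LinearIsometryEquiv.norm_map, LinearIsometryEquiv.norm_map]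
  have hβ_ne : β ≠ -b := by
    intro heq
    refine hΔ.sub_smul_notMem hΦ ha hb hab one_pos ?_
    have hreflect : a - (1 : ℝ) • b = γ - cpair γ a • a := by
      rw [one_smul, sub_eq_add_neg, ← heq, hβ]
      module
    exact hreflect ▸ hΦ.reflection_mem a haΦ γ hγ
  by_contra! hlt
  have hβb : cpair β b ≤ -2 := hΦ.cpair_le_neg_two_of_lt_neg_one hβΦ hbΦ hlt
  have hle : 4 * ‖b‖ ^ 2 ≤ ‖γ‖ ^ 2 := by
    have hba := hΦ.two_mul_norm_sq_le_of_cpair_le_neg_two hβΦ hbΦ hβ_ne hβb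
    have haγ := hΦ.two_mul_norm_sq_le_of_cpair_le_neg_two hγ haΦ hγ_neg hγa
    rw [hβ_norm] at hba
    linarith
  have hinner_ne {x y : E} (h : cpair x y ≤ -2) : ⟪x, y⟫ ≠ 0 := fun h0 ↦ by
    linarith [(cpair_eq_zero_iff x y).mpr h0]
  exact (hΦ.norm_sq_lt_four_mul_of_inner_sub_smul_ne_zero hγ haΦ hbΦ (hinner_ne hγa)
    (hinner_ne hβb)).not_ge hle

end IsBase

theorem statement16_general {Φ Δ : Finset E} (hΦ : IsRootSystem Φ) (hΔ : IsBase Φ Δ)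
    {μ : E} (hμ : ∀ a ∈ Δ, 0 ≤ cpair μ a)
    {γ : E} (hγ : γ ∈ Φ) {αj : E} (hαj : αj ∈ Δ)
    (hneg : cpair (weylVector Φ Δ + μ + γ) αj < 0) :
    ∀ αk ∈ Δ,
      0 ≤ cpair (weylVector Φ Δ + μ + γ + (-(cpair (weylVector Φ Δ + μ + γ) αj)) • αj) αk := by
  intro αk hαk
  rw [cpair_add_left, cpair_smul_left]
  rcases eq_or_ne αj αk with rfl | hjk
  · rw [cpair_self (hΦ.nonzero αj (hΔ.subset hαj))]
    linarith
  have hexpand : ∀ a ∈ Δ, cpair (weylVector Φ Δ + μ + γ) a = 1 + cpair μ a + cpair γ a := by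
    intro a ha
    rw [cpair_add_left, cpair_add_left, hΔ.cpair_weylVector hΦ ha]
  rw [hexpand αj hαj] at hneg ⊢
  rw [hexpand αk hαk]
  have hγj : cpair γ αj ≤ -2 :=
    hΦ.cpair_le_neg_two_of_lt_neg_one hγ (hΔ.subset hαj) (by linarith [hμ αj hαj])
  have hextremal := hΔ.neg_one_le_cpair_sub_smul hΦ hγ hαj hαk hjk hγj
  rw [cpair_sub_left, cpair_smul_left] at hextremal
  have hmono : cpair μ αj * cpair αj αk ≤ 0 :=
    mul_nonpos_of_nonneg_of_nonpos (hμ αj hαj) (hΔ.cpair_nonpos hΦ hαj hαk hjk)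
  linarith [hμ αk hαk]

end

/-- Let `μ` be a dominant integral weight, `γ ∈ Φ`, and suppose the
simple root `αj ∈ Δ` satisfies `⟨ρ + μ + γ, αj∨⟩ = -p < 0`.  Then the reflected weight
`s_{αj}(ρ + μ + γ) = ρ + μ + γ + p·αj` is dominant. -/
theorem statement16 {Φ Δ : Finset E} (hΦ : IsRootSystem Φ) (hΔ : IsBase Φ Δ)
    {μ : E} (hμ : ∀ a ∈ Δ, ∃ n : ℕ, cpair μ a = (n : ℝ))
    {γ : E} (hγ : γ ∈ Φ) {αj : E} (hαj : αj ∈ Δ)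
    (hneg : cpair (weylVector Φ Δ + μ + γ) αj < 0) :
    ∀ αk ∈ Δ,
      0 ≤ cpair (weylVector Φ Δ + μ + γ + (-(cpair (weylVector Φ Δ + μ + γ) αj)) • αj) αk :=
  statement16_general hΦ hΔ (fun a ha ↦ (hμ a ha).elim fun n hn ↦ hn ▸ n.cast_nonneg) hγ hαj hneg

end RootPaper
end
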